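/- arXiv:math/0209109 — 3 statements merged into one kernel-verified Lean document; each statement's English description precedes it below -/
import Mathlib

section
/- For every n ≥ 2 and every partition of {1,…,n+1} into three nonempty sets arranged as X|Y|Z, the bracket identities [X | Y∪Z ; X□(Y|Z)] = X|Y|Z and [X∪Y | Z ; (X|Y)□Z] = X|Y|Z hold (in particular, in each case C|D = X□(Y|Z), resp. (X|Y)□Z, lies in the appropriate class Q so that the bracket is defined). -/
namespace SU

/-- min of a finset of naturals (0 for the empty set). -/
def fmin (s : Finset ℕ) : ℕ := s.min.untopD 0
/-- max of a finset of naturals (0 for the empty set). -/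
def fmax (s : Finset ℕ) : ℕ := s.max.unbotD 0

/-- `L` is an ordered partition of the finite set `S`. -/
def IsOrderedPartition (S : Finset ℕ) (L : List (Finset ℕ)) : Prop :=
  (∀ B ∈ L, B ≠ ∅) ∧ List.Pairwise Disjoint L ∧ L.foldr (· ∪ ·) ∅ = S

/-- delete empty blocks. -/
def remEmpty (L : List (Finset ℕ)) : List (Finset ℕ) :=
  L.filter (fun s => decide (s ≠ ∅))

/-- `I_S(x)`: the (1-based) position of `x` in the increasing enumeration of `S`. -/
def iord (S : Finset ℕ) (x : ℕ) : ℕ := (S.filter (· ≤ x)).card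

/-- `I_S⁻¹(k)`: the `k`-th smallest element of `S` (1-based). -/
def iinv (S : Finset ℕ) (k : ℕ) : ℕ := (S.sort (· ≤ ·)).getD (k - 1) 0

/-- lower disjoint union `A ⊔̲ B` with respect to the ambient set `U`. -/
def lcup (U A B : Finset ℕ) : Finset ℕ :=
  if A = ∅ ∨ B = ∅ then A ∪ B
  else if fmin B = fmin (U \ A) then
    B.image (fun b => iord (U \ A) b + A.card - 1) ∪ Finset.Icc 1 A.card
  else B.image (fun b => iord (U \ A) b + A.card - 1)

/-- upper disjoint union `A ⊔̄ B` with respect to the ambient set `U`. -/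
def ucup (U A B : Finset ℕ) : Finset ℕ :=
  if A = ∅ ∨ B = ∅ then A ∪ B
  else if fmax A = fmax (U \ B) then
    A.image (iord (U \ B)) ∪ Finset.Icc (U.card - B.card) (U.card - 1)
  else A.image (iord (U \ B))

/-- `A □ (B_1|⋯|B_k) = (B_1|⋯|B_k) □ A`, with ambient set `U`. -/
def box (U A : Finset ℕ) (Bs : List (Finset ℕ)) : List (Finset ℕ) :=
  if fmax A = fmax U then Bs.map (fun B => ucup U B A)
  else Bs.map (fun B => lcup U A B)

/-- 2-block ordered partitions of `{1,…,n}`. -/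
def IsPart2 (n : ℕ) (C D : Finset ℕ) : Prop :=
  C ≠ ∅ ∧ D ≠ ∅ ∧ Disjoint C D ∧ C ∪ D = Finset.Icc 1 n

/-- `C|D ∈ Q_{r,1}(n)`. -/
def memQr1 (r n : ℕ) (C D : Finset ℕ) : Prop :=
  IsPart2 n C D ∧ (Finset.Icc 1 r ⊆ C ∨ Finset.Icc 1 r ⊆ D)

/-- `C|D ∈ Q_{1,s}(n)`. -/
def memQ1s (s n : ℕ) (C D : Finset ℕ) : Prop :=
  IsPart2 n C D ∧ (Finset.Icc (n - s + 1) n ⊆ C ∨ Finset.Icc (n - s + 1) n ⊆ D)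

end SU
namespace SU

/-- The bracket `[A|B ; C|D]` (as a relation: `bracketRel n A B C D L` holds when one
of the defining cases of the bracket applies and produces `L`, empty blocks deleted).
Here `A|B` is a 2-block partition of `{1,…,n+1}` with `#A = p`, `#B = q`, and `C|D`
is a 2-block partition of `{1,…,n}`. -/
def bracketRel (n : ℕ) (A B C D : Finset ℕ) (L : List (Finset ℕ)) : Prop :=
  ((n+1) ∈ B ∧ memQr1 A.card n C D ∧
    L = remEmpty [A,
      (Finset.Icc (n - B.card + 1) n ∩ C).image (fun x => iinv B (x + 1 - A.card)),
      (Finset.Icc (n - B.card + 1) n ∩ D).image (fun x => iinv B (x + 1 - A.card))]) ∨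
  ((n+1) ∈ B ∧ memQ1s B.card n C D ∧
    L = remEmpty [(Finset.Icc 1 A.card ∩ C).image (iinv A),
      (Finset.Icc 1 A.card ∩ D).image (iinv A), B]) ∨
  ((n+1) ∈ A ∧ memQ1s A.card n C D ∧
    L = remEmpty [A, (Finset.Icc 1 B.card ∩ C).image (iinv B),
      (Finset.Icc 1 B.card ∩ D).image (iinv B)]) ∨
  ((n+1) ∈ A ∧ memQr1 B.card n C D ∧
    L = remEmpty [
      (Finset.Icc (n - A.card + 1) n ∩ C).image (fun x => iinv A (x + 1 - B.card)),
      (Finset.Icc (n - A.card + 1) n ∩ D).image (fun x => iinv A (x + 1 - B.card)), B])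

/-!
Let `W ⊆ U`, `#U = n + 1` and `V = U \ W`. Contracting the `#W` smallest (resp. largest) numbers of
`{1,…,n}` to one point gives a monotone surjection `{1,…,n} → V`, and `W ⊔̲ P` (resp. `P ⊔̄ W`) is
the preimage of `P ⊆ V` under it. Hence `W □ (P|Q)` is the preimage of the partition `P|Q` of `V`.
The bracket maps the two preimages back to `V` after restricting them to an interval on which the
surjection is a bijection, so it recovers `P` and `Q`; the membership in `Q_{r,1}` or `Q_{1,s}`
holds because the contracted interval lies in a single fibre.
-/

section Development

open Finset

variable {n w k x : ℕ} {s t J K P Q S U V W : Finset ℕ} {f : ℕ → ℕ}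

/-! ### Enumeration of a finite set -/

lemma iord_eq_count (S : Finset ℕ) (x : ℕ) : iord S x = Nat.count (· ∈ S) (x + 1) := by
  rw [Nat.count_eq_card_filter_range, iord]
  congr 1
  grind

lemma iinv_eq_nth (S : Finset ℕ) (k : ℕ) : iinv S k = Nat.nth (· ∈ S) (k - 1) := by
  have hfin : (Set.ofPred (· ∈ S)).Finite := S.finite_toSet
  rw [Nat.nth_eq_getD_sort hfin, iinv, show hfin.toFinset = S from S.finite_toSet_toFinset]

lemma sub_one_lt_card_toFinset (hk : k ∈ Icc 1 #S) (hfin : (Set.ofPred (· ∈ S)).Finite) :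
    k - 1 < #hfin.toFinset := by
  rw [show hfin.toFinset = S from S.finite_toSet_toFinset]
  grind

lemma iinv_mem (hk : k ∈ Icc 1 #S) : iinv S k ∈ S := by
  rw [iinv_eq_nth]
  exact Nat.nth_mem (p := (· ∈ S)) _ (sub_one_lt_card_toFinset hk)

lemma iord_iinv (hk : k ∈ Icc 1 #S) : iord S (iinv S k) = k := by
  rw [iinv_eq_nth, iord_eq_count, Nat.count_nth_succ (sub_one_lt_card_toFinset hk)]
  exact Nat.sub_add_cancel (mem_Icc.1 hk).1

lemma iinv_iord (hx : x ∈ S) : iinv S (iord S x) = x := by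
  rw [iinv_eq_nth, iord_eq_count, Nat.count_succ, if_pos hx, Nat.add_sub_cancel,
    Nat.nth_count (p := (· ∈ S)) hx]

lemma iord_mem_Icc (hx : x ∈ S) : iord S x ∈ Icc 1 #S :=
  mem_Icc.2 ⟨card_pos.2 ⟨x, mem_filter.2 ⟨hx, le_rfl⟩⟩, card_filter_le _ _⟩

lemma monotoneOn_iinv (S : Finset ℕ) : MonotoneOn (iinv S) (Set.Icc 1 #S) := by
  intro k _ l hl hkl
  rw [iinv_eq_nth, iinv_eq_nth]
  exact Nat.nth_le_nth' (Nat.sub_le_sub_right hkl 1)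
    (sub_one_lt_card_toFinset (mem_Icc.2 hl))

lemma image_iinv_Icc (S : Finset ℕ) : (Icc 1 #S).image (iinv S) = S := by
  ext x
  rw [mem_image]
  constructor
  · rintro ⟨k, hk, rfl⟩
    exact iinv_mem hk
  · exact fun hx ↦ ⟨iord S x, iord_mem_Icc hx, iinv_iord hx⟩

lemma image_iord (hPS : P ⊆ S) : P.image (iord S) = {k ∈ Icc 1 #S | iinv S k ∈ P} := by
  ext k
  rw [mem_image, mem_filter]
  constructor
  · rintro ⟨x, hx, rfl⟩
    exact ⟨iord_mem_Icc (hPS hx), (iinv_iord (hPS hx)).symm ▸ hx⟩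
  · exact fun ⟨hk, hkP⟩ ↦ ⟨iinv S k, hkP, iord_iinv hk⟩

/-! ### Extremal elements -/

lemma isLeast_fmin (hs : s.Nonempty) : IsLeast (s : Set ℕ) (fmin s) := by
  rw [fmin, ← coe_min' hs]
  exact s.isLeast_min' hs

lemma isGreatest_fmax (hs : s.Nonempty) : IsGreatest (s : Set ℕ) (fmax s) := by
  rw [fmax, ← coe_max' hs]
  exact s.isGreatest_max' hs

lemma fmin_eq_fmin_iff_mem (hs : s.Nonempty) (hst : s ⊆ t) : fmin s = fmin t ↔ fmin t ∈ s :=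
  ⟨fun h ↦ h ▸ (isLeast_fmin hs).1, fun h ↦ (isLeast_fmin hs).unique
    ⟨h, fun _ hx ↦ (isLeast_fmin (hs.mono hst)).2 (hst hx)⟩⟩

lemma fmax_eq_fmax_iff_mem (hs : s.Nonempty) (hst : s ⊆ t) : fmax s = fmax t ↔ fmax t ∈ s :=
  ⟨fun h ↦ h ▸ (isGreatest_fmax hs).1, fun h ↦ (isGreatest_fmax hs).unique
    ⟨h, fun _ hx ↦ (isGreatest_fmax (hs.mono hst)).2 (hst hx)⟩⟩

lemma fmin_eq_iinv_one (hs : s.Nonempty) : fmin s = iinv s 1 := by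
  have hcard : 1 ≤ #s := card_pos.2 hs
  refine (isLeast_fmin hs).unique ⟨iinv_mem (left_mem_Icc.2 hcard), fun x hx ↦ ?_⟩
  have hord := mem_Icc.1 (iord_mem_Icc hx)
  rw [← iinv_iord hx]
  exact monotoneOn_iinv s ⟨le_rfl, hcard⟩ hord hord.1

lemma fmax_eq_iinv_card (hs : s.Nonempty) : fmax s = iinv s #s := by
  have hcard : 1 ≤ #s := card_pos.2 hs
  refine (isGreatest_fmax hs).unique ⟨iinv_mem (right_mem_Icc.2 hcard), fun x hx ↦ ?_⟩
  have hord := mem_Icc.1 (iord_mem_Icc hx)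
  rw [← iinv_iord hx]
  exact monotoneOn_iinv s hord ⟨hcard, le_rfl⟩ hord.2

lemma fmax_Icc_one (n : ℕ) : fmax (Icc 1 (n + 1)) = n + 1 :=
  (isGreatest_fmax (nonempty_Icc.2 (by omega))).unique (by simpa using isGreatest_Icc (by omega))

/-! ### Preimages of blocks -/

/-- The preimage of the block `P` under `f`, regarded as a map on `{1,…,n}`. -/
def pullback (n : ℕ) (f : ℕ → ℕ) (P : Finset ℕ) : Finset ℕ := {x ∈ Icc 1 n | f x ∈ P}

lemma mem_pullback : x ∈ pullback n f P ↔ x ∈ Icc 1 n ∧ f x ∈ P := mem_filter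

lemma image_inter_pullback (hJ : J ⊆ Icc 1 n) (hP : P ⊆ J.image f) :
    (J ∩ pullback n f P).image f = P := by
  rw [pullback, inter_filter, inter_eq_left.2 hJ, ← filter_image (p := (· ∈ P)),
    filter_mem_eq_inter, inter_eq_right.2 hP]

lemma pullback_nonempty (hP : P.Nonempty) (hPf : P ⊆ (Icc 1 n).image f) :
    (pullback n f P).Nonempty := by
  rw [← image_inter_pullback Subset.rfl hPf] at hP
  exact (image_nonempty.1 hP).mono inter_subset_right

lemma isPart2_pullback (hP : P.Nonempty) (hQ : Q.Nonempty) (hPQ : Disjoint P Q)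
    (hf : (Icc 1 n).image f = P ∪ Q) : IsPart2 n (pullback n f P) (pullback n f Q) := by
  refine ⟨(pullback_nonempty hP (hf ▸ subset_union_left)).ne_empty,
    (pullback_nonempty hQ (hf ▸ subset_union_right)).ne_empty,
    disjoint_filter.2 fun _ _ hxP hxQ ↦ disjoint_left.1 hPQ hxP hxQ, ?_⟩
  rw [pullback, pullback, ← filter_or, filter_eq_self]
  exact fun x hx ↦ mem_union.1 (hf ▸ mem_image_of_mem f hx)

lemma subset_pullback_or_subset_pullback (hK : K ⊆ Icc 1 n) {c : ℕ} (hc : c ∈ P ∪ Q)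
    (hf : ∀ x ∈ K, f x = c) : K ⊆ pullback n f P ∨ K ⊆ pullback n f Q :=
  (mem_union.1 hc).imp
    (fun h x hx ↦ mem_pullback.2 ⟨hK hx, (hf x hx).symm ▸ h⟩)
    (fun h x hx ↦ mem_pullback.2 ⟨hK hx, (hf x hx).symm ▸ h⟩)

/-! ### The lower union as a preimage -/

/-- The monotone surjection `{1,…,w + #V - 1} → V` that sends `1, …, w` to `min V`; for `w = #W` and
`V = U \ W`, the lower union `W ⊔̲ P` is the preimage of `P` under it. -/
def lowerCollapse (w : ℕ) (V : Finset ℕ) (x : ℕ) : ℕ := iinv V (max 1 (x + 1 - w))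

lemma lowerCollapse_of_le (h : x ≤ w) : lowerCollapse w V x = iinv V 1 := by
  rw [lowerCollapse, max_eq_left (by omega)]

lemma lowerCollapse_of_ge (h : w ≤ x) : lowerCollapse w V x = iinv V (x + 1 - w) := by
  rw [lowerCollapse, max_eq_right (by omega)]

lemma image_lowerCollapse_Icc (hV : V.Nonempty) (hn : w + #V = n + 1) (hk : k ≤ w) :
    (Icc k n).image (lowerCollapse w V) = V := by
  have hcard : 1 ≤ #V := card_pos.2 hV
  have hindex : (Icc k n).image (fun x ↦ max 1 (x + 1 - w)) = Icc 1 #V := by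
    ext i
    simp only [mem_image, mem_Icc]
    constructor
    · rintro ⟨x, hx, rfl⟩
      omega
    · exact fun hi ↦ ⟨i + w - 1, by omega, by omega⟩
  calc (Icc k n).image (lowerCollapse w V)
      = ((Icc k n).image (fun x ↦ max 1 (x + 1 - w))).image (iinv V) := image_image.symm
    _ = V := by rw [hindex, image_iinv_Icc]

lemma mem_image_iord_add_sub_one (hw : 1 ≤ w) (hn : w + #V = n + 1) (hPV : P ⊆ V) :
    x ∈ P.image (fun b ↦ iord V b + w - 1) ↔ w ≤ x ∧ x ∈ pullback n (lowerCollapse w V) P := by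
  have himage : P.image (fun b ↦ iord V b + w - 1) =
      ({k ∈ Icc 1 #V | iinv V k ∈ P}).image (fun k ↦ k + w - 1) := by
    rw [← image_iord hPV, image_image]
    rfl
  rw [himage, mem_pullback]
  simp only [mem_image, mem_filter, mem_Icc]
  constructor
  · rintro ⟨k, ⟨hk, hkP⟩, rfl⟩
    have hwk : w ≤ k + w - 1 := by omega
    rw [lowerCollapse_of_ge hwk, show k + w - 1 + 1 - w = k by omega]
    exact ⟨hwk, by omega, hkP⟩
  · rintro ⟨hwx, hx, hxP⟩
    rw [lowerCollapse_of_ge hwx] at hxP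
    exact ⟨x + 1 - w, ⟨by omega, hxP⟩, by omega⟩

lemma card_add_card_sdiff (hWU : W ⊆ U) (hU : #U = n + 1) : #W + #(U \ W) = n + 1 := by
  rw [add_comm, card_sdiff_add_card_eq_card hWU, hU]

lemma lcup_eq_pullback (hWU : W ⊆ U) (hU : #U = n + 1) (hW : W.Nonempty) (hP : P.Nonempty)
    (hPV : P ⊆ U \ W) : lcup U W P = pullback n (lowerCollapse #W (U \ W)) P := by
  have hn := card_add_card_sdiff hWU hU
  have hV : (U \ W).Nonempty := hP.mono hPV
  have hWpos : 1 ≤ #W := card_pos.2 hW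
  have hVpos : 1 ≤ #(U \ W) := card_pos.2 hV
  have hmin_iff : fmin P = fmin (U \ W) ↔ iinv (U \ W) 1 ∈ P :=
    fmin_eq_iinv_one hV ▸ fmin_eq_fmin_iff_mem hP hPV
  ext x
  -- The contracted interval lies in one fibre, so it belongs to the preimage exactly when
  -- `min V ∈ P`: this is the case distinction in the definition of `⊔̲`.
  have hlow (hx : x ≤ #W) :
      x ∈ pullback n (lowerCollapse #W (U \ W)) P ↔ 1 ≤ x ∧ iinv (U \ W) 1 ∈ P := by
    rw [mem_pullback, lowerCollapse_of_le hx, mem_Icc]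
    grind
  rw [lcup, if_neg (not_or.2 ⟨hW.ne_empty, hP.ne_empty⟩)]
  split_ifs with hmin <;> rw [hmin_iff] at hmin
  · rw [mem_union, mem_image_iord_add_sub_one hWpos hn hPV, mem_Icc]
    grind [mem_pullback]
  · rw [mem_image_iord_add_sub_one hWpos hn hPV]
    grind

lemma memQr1_lcup (hWU : W ⊆ U) (hU : #U = n + 1) (hW : W.Nonempty) (hP : P.Nonempty)
    (hQ : Q.Nonempty) (hPQ : Disjoint P Q) (hV : P ∪ Q = U \ W) :
    memQr1 #W n (lcup U W P) (lcup U W Q) := by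
  have hn := card_add_card_sdiff hWU hU
  have hVne : (U \ W).Nonempty := hV ▸ hP.mono subset_union_left
  have hVpos : 1 ≤ #(U \ W) := card_pos.2 hVne
  rw [lcup_eq_pullback hWU hU hW hP (hV ▸ subset_union_left),
    lcup_eq_pullback hWU hU hW hQ (hV ▸ subset_union_right)]
  refine ⟨isPart2_pullback hP hQ hPQ ?_,
    subset_pullback_or_subset_pullback (c := iinv (U \ W) 1) ?_ ?_ ?_⟩
  · rw [image_lowerCollapse_Icc hVne hn (card_pos.2 hW), hV]
  · exact Icc_subset_Icc_right (by omega)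
  · rw [hV]
    exact iinv_mem (left_mem_Icc.2 hVpos)
  · exact fun x hx ↦ lowerCollapse_of_le (mem_Icc.1 hx).2

lemma image_iinv_inter_lcup (hWU : W ⊆ U) (hU : #U = n + 1) (hW : W.Nonempty) (hP : P.Nonempty)
    (hPV : P ⊆ U \ W) :
    (Icc (n - #(U \ W) + 1) n ∩ lcup U W P).image (fun x ↦ iinv (U \ W) (x + 1 - #W)) = P := by
  have hn := card_add_card_sdiff hWU hU
  have hWpos : 1 ≤ #W := card_pos.2 hW
  rw [lcup_eq_pullback hWU hU hW hP hPV, show n - #(U \ W) + 1 = #W by omega]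
  calc (Icc #W n ∩ pullback n (lowerCollapse #W (U \ W)) P).image
          (fun x ↦ iinv (U \ W) (x + 1 - #W))
      = (Icc #W n ∩ pullback n (lowerCollapse #W (U \ W)) P).image
          (lowerCollapse #W (U \ W)) :=
        image_congr fun x hx ↦ (lowerCollapse_of_ge (mem_Icc.1 (mem_inter.1 hx).1).1).symm
    _ = P := image_inter_pullback (Icc_subset_Icc_left hWpos)
        (by rwa [image_lowerCollapse_Icc (hP.mono hPV) hn le_rfl])

/-! ### The upper union as a preimage -/

/-- The monotone surjection `{1,…,n} → V` that sends `#V, …, n` to `max V`; for `V = U \ W` and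
`n = #U - 1`, the upper union `P ⊔̄ W` is the preimage of `P` under it. -/
def upperCollapse (V : Finset ℕ) (x : ℕ) : ℕ := iinv V (min x #V)

lemma upperCollapse_of_le (h : x ≤ #V) : upperCollapse V x = iinv V x := by
  rw [upperCollapse, min_eq_left h]

lemma upperCollapse_of_ge (h : #V ≤ x) : upperCollapse V x = iinv V #V := by
  rw [upperCollapse, min_eq_right h]

lemma image_upperCollapse_Icc (hV : V.Nonempty) (hk : #V ≤ k) :
    (Icc 1 k).image (upperCollapse V) = V := by
  have hcard : 1 ≤ #V := card_pos.2 hV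
  have hindex : (Icc 1 k).image (min · #V) = Icc 1 #V := by
    ext i
    simp only [mem_image, mem_Icc]
    constructor
    · rintro ⟨x, hx, rfl⟩
      omega
    · exact fun hi ↦ ⟨i, by omega, by omega⟩
  calc (Icc 1 k).image (upperCollapse V)
      = ((Icc 1 k).image (min · #V)).image (iinv V) := image_image.symm
    _ = V := by rw [hindex, image_iinv_Icc]

lemma mem_image_iord (hn : #V ≤ n) (hPV : P ⊆ V) :
    x ∈ P.image (iord V) ↔ x ≤ #V ∧ x ∈ pullback n (upperCollapse V) P := by
  rw [image_iord hPV, mem_filter, mem_pullback, mem_Icc, mem_Icc]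
  constructor
  · rintro ⟨hx, hxP⟩
    exact ⟨hx.2, ⟨hx.1, by omega⟩, (upperCollapse_of_le hx.2).symm ▸ hxP⟩
  · rintro ⟨hxV, hx, hxP⟩
    exact ⟨⟨hx.1, hxV⟩, upperCollapse_of_le hxV ▸ hxP⟩

lemma ucup_eq_pullback (hWU : W ⊆ U) (hU : #U = n + 1) (hW : W.Nonempty) (hP : P.Nonempty)
    (hPV : P ⊆ U \ W) : ucup U P W = pullback n (upperCollapse (U \ W)) P := by
  have hV : (U \ W).Nonempty := hP.mono hPV
  have hWpos : 1 ≤ #W := card_pos.2 hW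
  have hVpos : 1 ≤ #(U \ W) := card_pos.2 hV
  have hn := card_add_card_sdiff hWU hU
  have hVn : #(U \ W) ≤ n := by omega
  have hmax_iff : fmax P = fmax (U \ W) ↔ iinv (U \ W) #(U \ W) ∈ P :=
    fmax_eq_iinv_card hV ▸ fmax_eq_fmax_iff_mem hP hPV
  ext x
  have hhigh (hx : #(U \ W) ≤ x) :
      x ∈ pullback n (upperCollapse (U \ W)) P ↔ x ≤ n ∧ iinv (U \ W) #(U \ W) ∈ P := by
    rw [mem_pullback, upperCollapse_of_ge hx, mem_Icc]
    grind
  rw [ucup, if_neg (not_or.2 ⟨hP.ne_empty, hW.ne_empty⟩)]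
  split_ifs with hmax <;> rw [hmax_iff] at hmax
  · rw [mem_union, mem_image_iord hVn hPV, mem_Icc]
    grind [mem_pullback]
  · rw [mem_image_iord hVn hPV]
    grind

lemma memQ1s_ucup (hWU : W ⊆ U) (hU : #U = n + 1) (hW : W.Nonempty) (hP : P.Nonempty)
    (hQ : Q.Nonempty) (hPQ : Disjoint P Q) (hV : P ∪ Q = U \ W) :
    memQ1s #W n (ucup U P W) (ucup U Q W) := by
  have hn := card_add_card_sdiff hWU hU
  have hVne : (U \ W).Nonempty := hV ▸ hP.mono subset_union_left
  have hWpos : 1 ≤ #W := card_pos.2 hW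
  have hVpos : 1 ≤ #(U \ W) := card_pos.2 hVne
  rw [ucup_eq_pullback hWU hU hW hP (hV ▸ subset_union_left),
    ucup_eq_pullback hWU hU hW hQ (hV ▸ subset_union_right)]
  refine ⟨isPart2_pullback hP hQ hPQ ?_,
    subset_pullback_or_subset_pullback (c := iinv (U \ W) #(U \ W)) ?_ ?_ fun x hx ↦ ?_⟩
  · rw [image_upperCollapse_Icc hVne (by omega), hV]
  · exact Icc_subset_Icc_left (by omega)
  · rw [hV]
    exact iinv_mem (right_mem_Icc.2 hVpos)
  · have hx' := mem_Icc.1 hx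
    exact upperCollapse_of_ge (by omega)

lemma image_iinv_inter_ucup (hWU : W ⊆ U) (hU : #U = n + 1) (hW : W.Nonempty) (hP : P.Nonempty)
    (hPV : P ⊆ U \ W) : (Icc 1 #(U \ W) ∩ ucup U P W).image (iinv (U \ W)) = P := by
  have hn := card_add_card_sdiff hWU hU
  have hWpos : 1 ≤ #W := card_pos.2 hW
  rw [ucup_eq_pullback hWU hU hW hP hPV]
  calc (Icc 1 #(U \ W) ∩ pullback n (upperCollapse (U \ W)) P).image (iinv (U \ W))
      = (Icc 1 #(U \ W) ∩ pullback n (upperCollapse (U \ W)) P).image (upperCollapse (U \ W)) :=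
        image_congr fun x hx ↦ (upperCollapse_of_le (mem_Icc.1 (mem_inter.1 hx).1).2).symm
    _ = P := image_inter_pullback (Icc_subset_Icc_right (by omega))
        (by rwa [image_upperCollapse_Icc (hP.mono hPV) le_rfl])

/-! ### The bracket -/

lemma box_of_fmax_mem (hWU : W ⊆ U) (h : fmax U ∈ W) (Bs : List (Finset ℕ)) :
    box U W Bs = Bs.map (ucup U · W) :=
  if_pos ((fmax_eq_fmax_iff_mem ⟨_, h⟩ hWU).2 h)

lemma box_of_fmax_notMem (hWU : W ⊆ U) (hW : W.Nonempty) (h : fmax U ∉ W) (Bs : List (Finset ℕ)) :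
    box U W Bs = Bs.map (lcup U W) :=
  if_neg (mt (fmax_eq_fmax_iff_mem hW hWU).1 h)

lemma remEmpty_eq_self {L : List (Finset ℕ)} (hL : ∀ B ∈ L, B.Nonempty) : remEmpty L = L :=
  List.filter_eq_self.2 fun B hB ↦ decide_eq_true (hL B hB).ne_empty

lemma bracketRel_self_sdiff_box (hWU : W ⊆ Icc 1 (n + 1)) (hW : W.Nonempty) (hP : P.Nonempty)
    (hQ : Q.Nonempty) (hPQ : Disjoint P Q) (hV : P ∪ Q = Icc 1 (n + 1) \ W) :
    bracketRel n W (Icc 1 (n + 1) \ W) ((box (Icc 1 (n + 1)) W [P, Q]).getD 0 ∅)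
      ((box (Icc 1 (n + 1)) W [P, Q]).getD 1 ∅) [W, P, Q] := by
  have hU : #(Icc 1 (n + 1)) = n + 1 := Nat.card_Icc 1 (n + 1)
  have hPV : P ⊆ Icc 1 (n + 1) \ W := hV ▸ subset_union_left
  have hQV : Q ⊆ Icc 1 (n + 1) \ W := hV ▸ subset_union_right
  have hblocks : remEmpty [W, P, Q] = [W, P, Q] := remEmpty_eq_self (by simp [hW, hP, hQ])
  by_cases hmax : n + 1 ∈ W
  · rw [box_of_fmax_mem hWU ((fmax_Icc_one n).symm ▸ hmax)]
    refine .inr (.inr (.inl ⟨hmax, memQ1s_ucup hWU hU hW hP hQ hPQ hV, Eq.symm ?_⟩))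
    simpa [image_iinv_inter_ucup hWU hU hW hP hPV,
      image_iinv_inter_ucup hWU hU hW hQ hQV] using hblocks
  · rw [box_of_fmax_notMem hWU hW ((fmax_Icc_one n).symm ▸ hmax)]
    refine .inl ⟨by simp [hmax], memQr1_lcup hWU hU hW hP hQ hPQ hV, Eq.symm ?_⟩
    simpa [image_iinv_inter_lcup hWU hU hW hP hPV,
      image_iinv_inter_lcup hWU hU hW hQ hQV] using hblocks

lemma bracketRel_sdiff_self_box (hWU : W ⊆ Icc 1 (n + 1)) (hW : W.Nonempty) (hP : P.Nonempty)
    (hQ : Q.Nonempty) (hPQ : Disjoint P Q) (hV : P ∪ Q = Icc 1 (n + 1) \ W) :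
    bracketRel n (Icc 1 (n + 1) \ W) W ((box (Icc 1 (n + 1)) W [P, Q]).getD 0 ∅)
      ((box (Icc 1 (n + 1)) W [P, Q]).getD 1 ∅) [P, Q, W] := by
  have hU : #(Icc 1 (n + 1)) = n + 1 := Nat.card_Icc 1 (n + 1)
  have hPV : P ⊆ Icc 1 (n + 1) \ W := hV ▸ subset_union_left
  have hQV : Q ⊆ Icc 1 (n + 1) \ W := hV ▸ subset_union_right
  have hblocks : remEmpty [P, Q, W] = [P, Q, W] := remEmpty_eq_self (by simp [hW, hP, hQ])
  by_cases hmax : n + 1 ∈ W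
  · rw [box_of_fmax_mem hWU ((fmax_Icc_one n).symm ▸ hmax)]
    refine .inr (.inl ⟨hmax, memQ1s_ucup hWU hU hW hP hQ hPQ hV, Eq.symm ?_⟩)
    simpa [image_iinv_inter_ucup hWU hU hW hP hPV,
      image_iinv_inter_ucup hWU hU hW hQ hQV] using hblocks
  · rw [box_of_fmax_notMem hWU hW ((fmax_Icc_one n).symm ▸ hmax)]
    refine .inr (.inr (.inr ⟨by simp [hmax], memQr1_lcup hWU hU hW hP hQ hPQ hV, Eq.symm ?_⟩))
    simpa [image_iinv_inter_lcup hWU hU hW hP hPV,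
      image_iinv_inter_lcup hWU hU hW hQ hQV] using hblocks

end Development

/-- For every partition `X|Y|Z` of `{1,…,n+1}` into three nonempty
sets, the bracket identities `[X|Y∪Z ; X□(Y|Z)] = X|Y|Z` and
`[X∪Y|Z ; (X|Y)□Z] = X|Y|Z` hold; in particular in each case `C|D` lies in the
appropriate class `Q` so that the bracket is defined. -/
theorem statement15 (n : ℕ) (hn : 2 ≤ n) (X Y Z : Finset ℕ)
    (hX : X ≠ ∅) (hY : Y ≠ ∅) (hZ : Z ≠ ∅)
    (hXY : Disjoint X Y) (hXZ : Disjoint X Z) (hYZ : Disjoint Y Z)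
    (hU : X ∪ Y ∪ Z = Finset.Icc 1 (n+1)) :
    bracketRel n X (Y ∪ Z)
        ((box (Finset.Icc 1 (n+1)) X [Y, Z]).getD 0 ∅)
        ((box (Finset.Icc 1 (n+1)) X [Y, Z]).getD 1 ∅) [X, Y, Z] ∧
    bracketRel n (X ∪ Y) Z
        ((box (Finset.Icc 1 (n+1)) Z [X, Y]).getD 0 ∅)
        ((box (Finset.Icc 1 (n+1)) Z [X, Y]).getD 1 ∅) [X, Y, Z] := by
  rw [← Finset.nonempty_iff_ne_empty] at hX hY hZ
  have hYZ_eq : Y ∪ Z = Finset.Icc 1 (n + 1) \ X := by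
    rw [← hU, Finset.union_assoc,
      Finset.union_sdiff_cancel_left (Finset.disjoint_union_right.2 ⟨hXY, hXZ⟩)]
  have hXY_eq : X ∪ Y = Finset.Icc 1 (n + 1) \ Z := by
    rw [← hU, Finset.union_sdiff_cancel_right (Finset.disjoint_union_left.2 ⟨hXZ, hYZ⟩)]
  have hXU : X ⊆ Finset.Icc 1 (n + 1) := by
    rw [← hU, Finset.union_assoc]
    exact Finset.subset_union_left
  have hZU : Z ⊆ Finset.Icc 1 (n + 1) := hU ▸ Finset.subset_union_right
  constructor
  · rw [hYZ_eq]
    exact bracketRel_self_sdiff_box hXU hX hY hZ hYZ hYZ_eq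
  · rw [hXY_eq]
    exact bracketRel_sdiff_self_box hZU hZ hX hY hXY hXY_eq

end SU
end

section
/- Let R be a commutative ring with unity, A a ℤ-graded R-module, and for each k ≥ 1 let φ^k : A^{⊗k} → A be a homogeneous map of degree k − 2. If (A, φ^n)_{n≥1} is an A_∞-algebra, i.e. the coderivation-type map d on ⊕_{n≥1}(↑A)^{⊗n} defined by d = Σ_{n≥1} Σ_{k=1}^{n} Σ_{i=0}^{n−k} (−1)^{⌊(n−k)/2⌋ + i(k+1)} ↑^{⊗(n−k+1)} ∘ φ^k_{i,n−k−i} ∘ ↓^{⊗n} satisfies d² = 0, then for every n ≥ 1 the quadratic relations Σ_{ℓ=0}^{n−1} Σ_{i=0}^{n−ℓ−1} (−1)^{ℓ(i+1)} φ^{n−ℓ} ∘ φ^{ℓ+1}_{i,n−ℓ−1−i} = 0 hold as maps A^{⊗n} → A. -/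
open TensorProduct

namespace SU18

universe u
variable (R : Type u) [CommRing R] (A : ℤ → Type u)
  [∀ i, AddCommGroup (A i)] [∀ i, Module R (A i)]

/-- iterated tensor product of graded pieces of `A` along a list of degrees
(`T [] = R`, `T (d :: l) = A d ⊗ T l`). -/
noncomputable def Tc : List ℤ → ModuleCat.{u} R
  | [] => ModuleCat.of R R
  | d :: l => ModuleCat.of R (A d ⊗[R] (Tc l))

/-- the underlying module of `Tc`. -/
abbrev Tm (l : List ℤ) : Type u := (Tc R A l : Type u)

/-- splitting of an iterated tensor product along a concatenation. -/
noncomputable def tsplit :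
    (l₁ l₂ : List ℤ) → (Tm R A (l₁ ++ l₂) ≃ₗ[R] (Tm R A l₁ ⊗[R] Tm R A l₂))
  | [], l₂ => (TensorProduct.lid R (Tm R A l₂)).symm
  | d :: l₁, l₂ =>
      (TensorProduct.congr (LinearEquiv.refl R (A d)) (tsplit l₁ l₂)).trans
        (TensorProduct.assoc R (A d) (Tm R A l₁) (Tm R A l₂)).symm

noncomputable def lcast {l₁ l₂ : List ℤ} (h : l₁ = l₂) : Tm R A l₁ ≃ₗ[R] Tm R A l₂ := by
  subst h; exact LinearEquiv.refl R _

end SU18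
namespace SU18

universe u
variable (R : Type u) [CommRing R] (A : ℤ → Type u)
  [∀ i, AddCommGroup (A i)] [∀ i, Module R (A i)]

def sgnz (z : ℤ) : ℤ := if Even z then 1 else -1

/-- Koszul exponent for applying a tensor power of maps of degree `±1` to a component
with degree list `l`: `Σ_j (m−1−j)·l_j`. -/
def kexp (l : List ℤ) : ℤ :=
  ∑ j ∈ Finset.range l.length, ((l.length - 1 - j : ℕ) : ℤ) * l.getD j 0

/-- the degree list obtained by replacing the `k` entries starting at position `i`
by their sum plus `c`. -/
def barList (ds : List ℤ) (i k : ℕ) (c : ℤ) : List ℤ :=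
  ds.take i ++ (((ds.drop i).take k).sum + c) :: (ds.drop i).drop k

lemma mapshift (l : List ℤ) : (l.map (fun e => e + 1)).map (fun e => e - 1) = l := by
  induction l with
  | nil => simp
  | cons a l ih => simp [ih]

/-- `1^{⊗i} ⊗ φ^k ⊗ 1^{⊗(j)}` (without the Koszul sign, which only depends on the
degree list and is applied separately as a scalar). -/
noncomputable def extMap (c : ℤ)
    (φk : (l : List ℤ) → Tm R A l →ₗ[R] A (l.sum + c)) (ds : List ℤ) (i k : ℕ) :
    Tm R A ds →ₗ[R] Tm R A (barList ds i k c) :=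
  (tsplit R A (ds.take i)
      ((((ds.drop i).take k).sum + c) :: (ds.drop i).drop k)).symm.toLinearMap
    ∘ₗ (TensorProduct.map LinearMap.id
          (TensorProduct.map (φk ((ds.drop i).take k)) LinearMap.id))
    ∘ₗ (TensorProduct.congr (LinearEquiv.refl R (Tm R A (ds.take i)))
          (tsplit R A ((ds.drop i).take k) ((ds.drop i).drop k))).toLinearMap
    ∘ₗ (tsplit R A (ds.take i) ((ds.drop i).take k ++ (ds.drop i).drop k)).toLinearMap
    ∘ₗ (lcast R A (by rw [List.take_append_drop, List.take_append_drop])).toLinearMap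

end SU18
namespace SU18

universe u
variable (R : Type u) [CommRing R] (A : ℤ → Type u)
  [∀ i, AddCommGroup (A i)] [∀ i, Module R (A i)]

/-- `⊕_{n≥1} (↑A)^{⊗n}`: the direct sum over nonempty lists of suspended degrees,
the component of ↑-degree list `es` being `T(es − 1)`. -/
abbrev Bar : Type u :=
  DirectSum {l : List ℤ // l ≠ []} (fun l => Tm R A (l.val.map (fun e => e - 1)))

/-- the tilde-bar differential
`d = Σ_{n≥1} Σ_{k=1}^{n} Σ_{i=0}^{n−k} (−1)^{⌊(n−k)/2⌋+i(k+1)} ↑^{⊗(n−k+1)} ∘ φ^k_{i,n−k−i} ∘ ↓^{⊗n}`,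
where `↑^{⊗m}`, `↓^{⊗m}` and `φ^k_{i,j}` carry Koszul signs (these are scalars on each
component, recorded by `sgnz ∘ kexp` and the `sgnz (… * (take i …).sum)` factor). -/
noncomputable def barD
    (φ : (k : ℕ) → (l : List ℤ) → Tm R A l →ₗ[R] A (l.sum + ((k : ℤ) - 2))) :
    Bar R A →ₗ[R] Bar R A :=
  DirectSum.toModule R _ _ (fun es =>
    ∑ k ∈ Finset.Icc 1 es.val.length,
      ∑ i ∈ Finset.range (es.val.length - k + 1),
        ((-1 : ℤ) ^ ((es.val.length - k) / 2 + i * (k + 1)) *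
            sgnz (kexp es.val) *
            sgnz (((k : ℤ) - 2) * ((es.val.map (fun e => e - 1)).take i).sum) *
            sgnz (kexp (barList (es.val.map (fun e => e - 1)) i k ((k : ℤ) - 2)))) •
          ((DirectSum.lof R {l : List ℤ // l ≠ []}
              (fun l => Tm R A (l.val.map (fun e => e - 1)))
              ⟨(barList (es.val.map (fun e => e - 1)) i k ((k : ℤ) - 2)).map
                  (fun e => e + 1),
                by simp [barList]⟩) ∘ₗ
            (lcast R A (mapshift _)).symm.toLinearMap ∘ₗ
            (extMap R A ((k : ℤ) - 2) (φ k) (es.val.map (fun e => e - 1)) i k)))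

end SU18
namespace SU18

universe u

/-!
Project `d²` to the summand `↑A` of tensor length one. Since `φ^k` lowers tensor length by `k - 1`,
the outer `d` contributes only `φ^m` on a word of length `m`, so on `(↑A)^{⊗n}` the projection of
`d²` is a signed sum of the composites `φ^{n-k+1} ∘ φ^k_{i,n-k-i}`. Moving the `m = n - k + 1`
suspensions past each other costs `(-1)^(m.choose 2) = (-1)^⌊m/2⌋`, which combines with the factor
`(-1)^⌊(n-k)/2⌋` in `d` to `(-1)^(n-k)`. All signs then agree with those of the quadratic relation
up to a unit that depends only on the component.
-/

section FiniteSums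

lemma sum_Icc_one_eq_sum_range {M : Type*} [AddCommMonoid M] (f : ℕ → M) (n : ℕ) :
    ∑ k ∈ Finset.Icc 1 n, f k = ∑ l ∈ Finset.range n, f (l + 1) := by
  rw [← Finset.Ico_add_one_right_eq_Icc, Finset.range_eq_Ico, Finset.sum_Ico_add' f 0 n 1]

lemma linearMap_comp_sum {R M N P ι : Type*} [CommSemiring R] [AddCommMonoid M] [AddCommMonoid N]
    [AddCommMonoid P] [Module R M] [Module R N] [Module R P] (g : N →ₗ[R] P)
    (s : Finset ι) (f : ι → M →ₗ[R] N) :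
    g ∘ₗ ∑ i ∈ s, f i = ∑ i ∈ s, g ∘ₗ f i :=
  map_sum (g.compRight R (M := M)) f s

end FiniteSums

section Signs

lemma sgnz_eq_negOnePow (z : ℤ) : sgnz z = (z.negOnePow : ℤ) := by
  unfold sgnz
  split_ifs with h
  · simp [Int.negOnePow_even z h]
  · simp [Int.negOnePow_odd z (Int.not_even_iff_odd.mp h)]

lemma sgnz_add (a b : ℤ) : sgnz (a + b) = sgnz a * sgnz b := by
  simp [sgnz_eq_negOnePow, Int.negOnePow_add]

lemma sgnz_mul_self (a : ℤ) : sgnz a * sgnz a = 1 := by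
  rw [← sgnz_add, sgnz, if_pos (Even.add_self a)]

lemma sgnz_natCast (n : ℕ) : sgnz n = (-1) ^ n := by
  simp [sgnz_eq_negOnePow, Int.negOnePow_def]

lemma neg_one_pow_choose_two {M : Type*} [Monoid M] [HasDistribNeg M] (p : ℕ) :
    (-1 : M) ^ p.choose 2 = (-1) ^ (p / 2) := by
  induction p using Nat.twoStepInduction with
  | zero => rfl
  | one => rfl
  | more p ih _ =>
    have hchoose : (p + 2).choose 2 = p.choose 2 + 2 * p + 1 := by
      simp only [Nat.choose_succ_succ' _ 1, Nat.choose_one_right]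
      lia
    rw [hchoose, Nat.add_div_right p two_pos, pow_succ, pow_succ, pow_add, ih, pow_mul]
    simp

lemma neg_one_pow_half_mul_neg_one_pow_choose_two {M : Type*} [Monoid M] [HasDistribNeg M]
    (p : ℕ) : (-1 : M) ^ (p / 2) * (-1) ^ (p + 1).choose 2 = (-1) ^ p := by
  rw [Nat.choose_succ_succ' p 1, Nat.choose_one_right, pow_add, neg_one_pow_choose_two, ← pow_add,
    ← pow_add]
  exact neg_one_pow_congr (by simp only [Nat.even_add]; tauto)

lemma isUnit_sgnz (a : ℤ) : IsUnit (sgnz a) :=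
  IsUnit.of_mul_eq_one _ (sgnz_mul_self a)

lemma kexp_eq_zero_of_length_eq_one {l : List ℤ} (h : l.length = 1) : kexp l = 0 := by
  simp [kexp, h]

lemma kexp_map_add_one (l : List ℤ) :
    kexp (l.map (fun e => e + 1)) = kexp l + (l.length.choose 2 : ℕ) := by
  have hchoose : ((l.length.choose 2 : ℕ) : ℤ)
      = ∑ j ∈ Finset.range l.length, ((l.length - 1 - j : ℕ) : ℤ) := by
    rw [Nat.choose_two_right, ← Finset.sum_range_id, ← Finset.sum_range_reflect, Nat.cast_sum]
  rw [hchoose, kexp, kexp, List.length_map, ← Finset.sum_add_distrib]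
  refine Finset.sum_congr rfl fun j hj => ?_
  have hget : (l.map (fun e => e + 1)).getD j 0 = l.getD j 0 + 1 := by
    simp [List.getD_eq_getElem?_getD, Finset.mem_range.mp hj]
  rw [hget, mul_add, mul_one]

lemma barList_ne_nil (ds : List ℤ) (i k : ℕ) (c : ℤ) : barList ds i k c ≠ [] := by
  simp [barList]

lemma length_barList {ds : List ℤ} {i k : ℕ} (c : ℤ) (h : i + k ≤ ds.length) :
    (barList ds i k c).length = ds.length - k + 1 := by
  simp only [barList, List.length_append, List.length_take, List.length_cons, List.length_drop]
  lia

/-- The total sign of `φ^k_{i,n-k-i}` in `barD` on the component of `(↑A)^{⊗n}` whose desuspended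
degrees are `ds`: the explicit sign of `d` times the Koszul signs of `↓^{⊗n}`, of
`φ^k_{i,n-k-i}` and of `↑^{⊗(n-k+1)}`. -/
def barSign (ds : List ℤ) (k i : ℕ) : ℤ :=
  (-1) ^ ((ds.length - k) / 2 + i * (k + 1)) *
    sgnz (kexp (ds.map (fun e => e + 1))) *
    sgnz (((k : ℤ) - 2) * (ds.take i).sum) *
    sgnz (kexp (barList ds i k ((k : ℤ) - 2)))

/-- The sign of `φ^{n-ℓ} ∘ φ^{ℓ+1}_{i,n-ℓ-1-i}` in the quadratic relation on the component `ds` of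
`A^{⊗n}`, including the Koszul sign of `φ^{ℓ+1}_{i,n-ℓ-1-i}`. -/
def stasheffSign (ds : List ℤ) (l i : ℕ) : ℤ :=
  (-1) ^ (l * (i + 1)) * sgnz (((l + 1 : ℕ) - 2 : ℤ) * (ds.take i).sum)

lemma barSign_mul_sgnz_kexp_barList {ds : List ℤ} {l i : ℕ} (h : i + (l + 1) ≤ ds.length) :
    barSign ds (l + 1) i *
        sgnz (kexp ((barList ds i (l + 1) ((l + 1 : ℕ) - 2)).map (fun e => e + 1)))
      = sgnz (kexp (ds.map (fun e => e + 1))) * (-1) ^ (ds.length - 1) * stasheffSign ds l i := by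
  obtain ⟨p, hp⟩ : ∃ p, ds.length = l + 1 + p := Nat.exists_eq_add_of_le (by lia)
  have hlen : (barList ds i (l + 1) ((l + 1 : ℕ) - 2)).length = p + 1 := by
    rw [length_barList _ h]
    lia
  have hkoszul := sgnz_mul_self (kexp (barList ds i (l + 1) ((l + 1 : ℕ) - 2)))
  have hparity : (-1 : ℤ) ^ (i * (l + 1 + 1)) = (-1) ^ (l + l * (i + 1)) :=
    neg_one_pow_congr (by grind)
  rw [kexp_map_add_one (barList _ _ _ _), hlen, sgnz_add, sgnz_natCast, barSign, stasheffSign, hp,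
    Nat.add_sub_cancel_left, show l + 1 + p - 1 = l + p by lia]
  generalize sgnz (kexp (ds.map _)) = a, sgnz (kexp (barList _ _ _ _)) = b at *
  generalize sgnz (_ * (ds.take i).sum) = s
  calc (-1) ^ (p / 2 + i * (l + 1 + 1)) * a * s * b * (b * (-1) ^ (p + 1).choose 2)
      = a * s * ((-1) ^ (p / 2) * (-1) ^ (p + 1).choose 2) *
          (-1) ^ (i * (l + 1 + 1)) * (b * b) := by ring
    _ = a * s * (-1) ^ p * (-1) ^ (l + l * (i + 1)) := by
        rw [hkoszul, mul_one, hparity, neg_one_pow_half_mul_neg_one_pow_choose_two]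
    _ = a * (-1) ^ (l + p) * ((-1) ^ (l * (i + 1)) * s) := by ring

end Signs

section TensorWords

variable {R : Type u} [CommRing R] {A : ℤ → Type u}
  [∀ i, AddCommGroup (A i)] [∀ i, Module R (A i)]

lemma comp_lcast_symm {M : Type*} [AddCommMonoid M] [Module R M]
    (F : (l : List ℤ) → Tm R A l →ₗ[R] M) {l₁ l₂ : List ℤ} (h : l₁ = l₂) :
    F l₁ ∘ₗ (lcast R A h).symm.toLinearMap = F l₂ := by
  subst h
  rfl

lemma lcast_cons_tmul {d : ℤ} {l l' : List ℤ} (h : l = l') (a : A d) (x : Tm R A l) :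
    lcast R A (congrArg (d :: ·) h) (show Tm R A (d :: l) from a ⊗ₜ[R] x)
      = a ⊗ₜ[R] lcast R A h x := by
  subst h
  rfl

lemma tsplit_cons_tmul {d : ℤ} {l₁ l₂ : List ℤ} (a : A d) (x : Tm R A (l₁ ++ l₂)) :
    tsplit R A (d :: l₁) l₂ (show Tm R A (d :: (l₁ ++ l₂)) from a ⊗ₜ[R] x)
      = (TensorProduct.assoc R (A d) (Tm R A l₁) (Tm R A l₂)).symm
          (a ⊗ₜ[R] tsplit R A l₁ l₂ x) := rfl

lemma tsplit_nil_right (l : List ℤ) (h : l = l ++ []) (x : Tm R A l) :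
    tsplit R A l [] (lcast R A h x) = x ⊗ₜ[R] (1 : R) := by
  induction l with
  | nil =>
    change (1 : R) ⊗ₜ[R] (show R from x) = (show R from x) ⊗ₜ[R] (1 : R)
    rw [← mul_one (show R from x), ← smul_eq_mul, TensorProduct.smul_tmul]
  | cons d l ih =>
    have hmaps : (tsplit R A (d :: l) []).toLinearMap ∘ₗ (lcast R A h).toLinearMap
        = (TensorProduct.mk R (Tm R A (d :: l)) (Tm R A [])).flip (1 : R) := by
      refine TensorProduct.ext' fun a y => ?_
      have hl : l = l ++ [] := l.append_nil.symm
      have hcast : tsplit R A (d :: l) [] (lcast R A h (show Tm R A (d :: l) from a ⊗ₜ[R] y))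
          = tsplit R A (d :: l) [] (show Tm R A (d :: (l ++ [])) from a ⊗ₜ[R] lcast R A hl y) :=
        congrArg _ (lcast_cons_tmul hl a y)
      refine hcast.trans ((tsplit_cons_tmul a _).trans ?_)
      rw [ih hl y]
      rfl
    exact LinearMap.congr_fun hmaps x

/-- `1_p ⊗ f_q ⊗ 1_r` on words already split as `p ++ (q ++ r)`, without Koszul sign. -/
noncomputable def midMap {c : ℤ} (f : (l : List ℤ) → Tm R A l →ₗ[R] A (l.sum + c))
    (p q r : List ℤ) : Tm R A (p ++ (q ++ r)) →ₗ[R] Tm R A (p ++ (q.sum + c) :: r) :=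
  (tsplit R A p ((q.sum + c) :: r)).symm.toLinearMap
    ∘ₗ TensorProduct.map LinearMap.id (TensorProduct.map (f q) LinearMap.id)
    ∘ₗ (TensorProduct.congr (LinearEquiv.refl R (Tm R A p)) (tsplit R A q r)).toLinearMap
    ∘ₗ (tsplit R A p (q ++ r)).toLinearMap

lemma extMap_eq_midMap_comp_lcast {c : ℤ} (f : (l : List ℤ) → Tm R A l →ₗ[R] A (l.sum + c))
    (ds : List ℤ) (i k : ℕ) :
    extMap R A c f ds i k
      = midMap f (ds.take i) ((ds.drop i).take k) ((ds.drop i).drop k)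
        ∘ₗ (lcast R A (by rw [List.take_append_drop, List.take_append_drop])).toLinearMap := rfl

variable (R A) in
/-- The projection of `⨁ₙ A^{⊗n}` to its tensor-length-one part `⨁_d A_d`, on the component of
degree list `l`. -/
noncomputable def lengthOneProj : (l : List ℤ) → Tm R A l →ₗ[R] DirectSum ℤ A
  | [d] => DirectSum.lof R ℤ A d ∘ₗ (TensorProduct.rid R (A d)).toLinearMap
  | [] | _ :: _ :: _ => 0

lemma lengthOneProj_eq_zero {l : List ℤ} (h : l.length ≠ 1) : lengthOneProj R A l = 0 := by
  match l, h with
  | [], _ | _ :: _ :: _, _ => rfl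

-- `q` and `r` are pinned by equations because `(ds.drop 0).take ds.length` and
-- `(ds.drop 0).drop ds.length` equal `ds` and `[]` only propositionally.
lemma lengthOneProj_comp_midMap {c : ℤ} (f : (l : List ℤ) → Tm R A l →ₗ[R] A (l.sum + c))
    {q r ds : List ℤ} (hq : q = ds) (hr : r = []) (h : ds = [] ++ (q ++ r)) :
    lengthOneProj R A ((q.sum + c) :: r) ∘ₗ midMap f [] q r ∘ₗ (lcast R A h).toLinearMap
      = DirectSum.lof R ℤ A (ds.sum + c) ∘ₗ f ds := by
  subst hq hr
  refine LinearMap.ext fun x => ?_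
  have hsplit : tsplit R A q [] (lcast R A h x) = x ⊗ₜ[R] (1 : R) := tsplit_nil_right q h x
  calc lengthOneProj R A [q.sum + c] (midMap f [] q [] (lcast R A h x))
      = DirectSum.lof R ℤ A _ (TensorProduct.rid R _ (TensorProduct.lid R _ ((1 : R) ⊗ₜ[R]
          TensorProduct.map (f q) LinearMap.id (tsplit R A q [] (lcast R A h x))))) := rfl
    _ = DirectSum.lof R ℤ A _ (TensorProduct.rid R _ (f q x ⊗ₜ[R] (1 : R))) := by
        rw [TensorProduct.lid_tmul, one_smul, hsplit]
        rfl
    _ = DirectSum.lof R ℤ A (q.sum + c) (f q x) := by rw [TensorProduct.rid_tmul, one_smul]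

lemma lengthOneProj_comp_extMap_length {c : ℤ}
    (f : (l : List ℤ) → Tm R A l →ₗ[R] A (l.sum + c)) (ds : List ℤ) :
    lengthOneProj R A (barList ds 0 ds.length c) ∘ₗ extMap R A c f ds 0 ds.length
      = DirectSum.lof R ℤ A (ds.sum + c) ∘ₗ f ds := by
  rw [extMap_eq_midMap_comp_lcast]
  exact lengthOneProj_comp_midMap f (by simp) (by simp) _

end TensorWords

section BarDifferential

variable {R : Type u} [CommRing R] {A : ℤ → Type u}
  [∀ i, AddCommGroup (A i)] [∀ i, Module R (A i)]

variable (R A) in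
/-- The inclusion `↑^{⊗n}` of the component of `A^{⊗n}` of degree list `ds` into the bar complex,
without Koszul sign. -/
noncomputable def suspIncl (ds : List ℤ) (h : ds ≠ []) : Tm R A ds →ₗ[R] Bar R A :=
  DirectSum.lof R {l : List ℤ // l ≠ []} (fun l => Tm R A (l.val.map (fun e => e - 1)))
      ⟨ds.map (fun e => e + 1), by simpa using h⟩
    ∘ₗ (lcast R A (mapshift ds)).symm.toLinearMap

variable (R A) in
/-- The projection of the bar complex to its tensor-length-one part `↑A`, desuspended. -/
noncomputable def barProj : Bar R A →ₗ[R] DirectSum ℤ A :=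
  DirectSum.toModule R _ _ fun es => lengthOneProj R A (es.val.map (fun e => e - 1))

lemma barProj_comp_suspIncl (ds : List ℤ) (h : ds ≠ []) :
    barProj R A ∘ₗ suspIncl R A ds h = lengthOneProj R A ds := by
  rw [← comp_lcast_symm (lengthOneProj R A) (mapshift ds)]
  refine LinearMap.ext fun x => ?_
  simp only [barProj, suspIncl, LinearMap.comp_apply, DirectSum.toModule_lof]

variable (φ : (k : ℕ) → (l : List ℤ) → Tm R A l →ₗ[R] A (l.sum + ((k : ℤ) - 2)))

/-- The term `↑^{⊗(n-k+1)} ∘ φ^k_{i,n-k-i} ∘ ↓^{⊗n}` of `barD` on the component of desuspended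
degrees `ds`, without signs. -/
noncomputable def barTerm (ds : List ℤ) (k i : ℕ) : Tm R A ds →ₗ[R] Bar R A :=
  suspIncl R A (barList ds i k ((k : ℤ) - 2)) (barList_ne_nil _ _ _ _)
    ∘ₗ extMap R A ((k : ℤ) - 2) (φ k) ds i k

/-- `φ^m` on the component of `A^{⊗m}` of degree list `l`, with values in the total module
`⨁_d A_d`. -/
noncomputable def totalOp (m : ℕ) (l : List ℤ) : Tm R A l →ₗ[R] DirectSum ℤ A :=
  DirectSum.lof R ℤ A (l.sum + ((m : ℤ) - 2)) ∘ₗ φ m l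

/-- The composite `φ^m ∘ φ^k_{i,n-k-i}` on the component `ds` of `A^{⊗n}`, without Koszul sign. -/
noncomputable def partialComp (ds : List ℤ) (m k i : ℕ) : Tm R A ds →ₗ[R] DirectSum ℤ A :=
  totalOp φ m (barList ds i k ((k : ℤ) - 2)) ∘ₗ extMap R A ((k : ℤ) - 2) (φ k) ds i k

/-- The left-hand side of the `n`-th quadratic (Stasheff) relation on the component `ds` of
`A^{⊗n}`, where `n` is the length of `ds`. -/
noncomputable def stasheffSum (ds : List ℤ) : Tm R A ds →ₗ[R] DirectSum ℤ A :=
  ∑ l ∈ Finset.range ds.length, ∑ i ∈ Finset.range (ds.length - l),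
    stasheffSign ds l i • partialComp φ ds (ds.length - l) (l + 1) i

lemma barD_comp_suspIncl (ds : List ℤ) (h : ds ≠ []) :
    barD R A φ ∘ₗ suspIncl R A ds h
      = ∑ k ∈ Finset.Icc 1 ds.length, ∑ i ∈ Finset.range (ds.length - k + 1),
          barSign ds k i • barTerm φ ds k i := by
  rw [← comp_lcast_symm (fun ds => ∑ k ∈ Finset.Icc 1 ds.length,
    ∑ i ∈ Finset.range (ds.length - k + 1), barSign ds k i • barTerm φ ds k i) (mapshift ds)]
  refine LinearMap.ext fun x => ?_
  simp only [barD, suspIncl, LinearMap.comp_apply, DirectSum.toModule_lof]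
  simp only [barSign, mapshift, List.length_map]
  rfl

lemma barProj_comp_barTerm (ds : List ℤ) (k i : ℕ) :
    barProj R A ∘ₗ barTerm φ ds k i
      = lengthOneProj R A (barList ds i k ((k : ℤ) - 2)) ∘ₗ
          extMap R A ((k : ℤ) - 2) (φ k) ds i k := by
  rw [barTerm, ← LinearMap.comp_assoc, barProj_comp_suspIncl]

lemma barProj_comp_barD_comp_suspIncl (ds : List ℤ) (h : ds ≠ []) :
    barProj R A ∘ₗ barD R A φ ∘ₗ suspIncl R A ds h
      = sgnz (kexp (ds.map (fun e => e + 1))) • totalOp φ ds.length ds := by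
  have hpos : 0 < ds.length := List.length_pos_iff.mpr h
  have hsign : barSign ds ds.length 0 = sgnz (kexp (ds.map (fun e => e + 1))) := by
    have hkexp : kexp (barList ds 0 ds.length ((ds.length : ℤ) - 2)) = 0 :=
      kexp_eq_zero_of_length_eq_one (by simp [length_barList])
    simp [barSign, hkexp, sgnz]
  simp only [barD_comp_suspIncl, linearMap_comp_sum, LinearMap.comp_smul, barProj_comp_barTerm]
  rw [Finset.sum_eq_single ds.length]
  · rw [Nat.sub_self, zero_add, Finset.sum_range_one, hsign, lengthOneProj_comp_extMap_length,
      totalOp]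
  · intro k hk hne
    refine Finset.sum_eq_zero fun i hi => ?_
    rw [Finset.mem_Icc] at hk
    rw [Finset.mem_range] at hi
    have hlen : (barList ds i k ((k : ℤ) - 2)).length ≠ 1 := by
      rw [length_barList _ (by lia)]
      lia
    rw [lengthOneProj_eq_zero hlen, LinearMap.zero_comp, smul_zero]
  · exact fun hnot => absurd (Finset.mem_Icc.mpr ⟨hpos, le_rfl⟩) hnot

lemma barProj_comp_barD_comp_barTerm {ds : List ℤ} {k i : ℕ} (h : i + k ≤ ds.length) :
    barProj R A ∘ₗ barD R A φ ∘ₗ barTerm φ ds k i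
      = sgnz (kexp ((barList ds i k ((k : ℤ) - 2)).map (fun e => e + 1))) •
          partialComp φ ds (ds.length - k + 1) k i := by
  have houter := barProj_comp_barD_comp_suspIncl φ _ (barList_ne_nil ds i k ((k : ℤ) - 2))
  rw [length_barList _ h] at houter
  rw [partialComp, ← LinearMap.smul_comp, ← houter]
  rfl

lemma barProj_comp_barD_comp_barD_comp_suspIncl (ds : List ℤ) (h : ds ≠ []) :
    barProj R A ∘ₗ barD R A φ ∘ₗ barD R A φ ∘ₗ suspIncl R A ds h
      = (sgnz (kexp (ds.map (fun e => e + 1))) * (-1) ^ (ds.length - 1)) • stasheffSum φ ds := by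
  simp only [barD_comp_suspIncl, stasheffSum, linearMap_comp_sum, LinearMap.comp_smul,
    Finset.smul_sum]
  rw [sum_Icc_one_eq_sum_range]
  refine Finset.sum_congr rfl fun l hl => ?_
  have hlen : ds.length - (l + 1) + 1 = ds.length - l := by
    rw [Finset.mem_range] at hl
    lia
  rw [hlen]
  refine Finset.sum_congr rfl fun i hi => ?_
  have hi' : i + (l + 1) ≤ ds.length := by
    rw [Finset.mem_range] at hi
    lia
  rw [barProj_comp_barD_comp_barTerm φ hi', hlen, smul_smul, smul_smul,
    barSign_mul_sgnz_kexp_barList hi']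

end BarDifferential

/-- If `(A, φⁿ)_{n≥1}` is an `A_∞`-algebra — i.e. the
coderivation-type map `d` on `⊕_{n≥1}(↑A)^{⊗n}` built from the homogeneous degree
`k−2` operations `φ^k : A^{⊗k} → A` satisfies `d² = 0` — then for every `n ≥ 1` the
quadratic relations
`Σ_{ℓ=0}^{n−1} Σ_{i=0}^{n−ℓ−1} (−1)^{ℓ(i+1)} φ^{n−ℓ} ∘ φ^{ℓ+1}_{i,n−ℓ−1−i} = 0`
hold as maps `A^{⊗n} → A` (stated here on each degree component `ds` of `A^{⊗n}`,
with the common target summand of `⊕_d A_d`; the factor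
`sgnz ((ℓ−1)·(deg x₁+⋯+deg x_i))` is the Koszul sign carried by `φ^{ℓ+1}_{i,n−ℓ−1−i}`). -/
theorem statement18 (R : Type u) [CommRing R] (A : ℤ → Type u)
    [∀ i, AddCommGroup (A i)] [∀ i, Module R (A i)]
    (φ : (k : ℕ) → (l : List ℤ) → Tm R A l →ₗ[R] A (l.sum + ((k : ℤ) - 2)))
    (hd : (barD R A φ) ∘ₗ (barD R A φ) = 0) :
    ∀ n : ℕ, 1 ≤ n → ∀ ds : List ℤ, ds.length = n →
      (∑ l ∈ Finset.range n, ∑ i ∈ Finset.range (n - l),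
        ((-1 : ℤ) ^ (l * (i + 1)) *
            sgnz ((((l : ℤ) + 1) - 2) * (ds.take i).sum)) •
          ((DirectSum.lof R ℤ A
              ((barList ds i (l + 1) (((l : ℤ) + 1) - 2)).sum + (((n - l : ℕ) : ℤ) - 2))) ∘ₗ
            (φ (n - l) (barList ds i (l + 1) (((l : ℤ) + 1) - 2))) ∘ₗ
            (extMap R A (((l : ℤ) + 1) - 2) (φ (l + 1)) ds i (l + 1)))) = 0 := by
  rintro n hn ds rfl
  have hds : ds ≠ [] := List.length_pos_iff.mp hn
  have hunit : IsUnit (sgnz (kexp (ds.map (fun e => e + 1))) * (-1) ^ (ds.length - 1)) :=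
    (isUnit_sgnz _).mul (isUnit_neg_one.pow _)
  have hsum : stasheffSum φ ds = 0 := by
    rw [← hunit.smul_eq_zero, ← barProj_comp_barD_comp_barD_comp_suspIncl φ ds hds,
      ← LinearMap.comp_assoc (suspIncl R A ds hds), hd, LinearMap.zero_comp, LinearMap.comp_zero]
  exact hsum

end SU18
end

section
/- Let R be a commutative ring with unity, A a ℤ-graded R-module, and for each k ≥ 1 let ψ^k : A → A^{⊗k} be a homogeneous map of degree k − 2. If (A, ψ^n)_{n≥1} is an A_∞-coalgebra, i.e. the derivation-type map d on ⊕_{n≥1}(↓A)^{⊗n} defined by d = Σ_{n,k≥1} Σ_{i=0}^{n−1} (−1)^{⌊n/2⌋ + i(k+1) + k(n+1)} ↓^{⊗(n+k−1)} ∘ ψ^k_{i,n−1−i} ∘ ↑^{⊗n} satisfies d² = 0, then for every n ≥ 1 the quadratic relations Σ_{ℓ=0}^{n−1} Σ_{i=0}^{n−ℓ−1} (−1)^{ℓ(n+i+1)} ψ^{ℓ+1}_{i,n−ℓ−1−i} ∘ ψ^{n−ℓ} = 0 hold as maps A → A^{⊗n}. -/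
/-!
On a single letter `↓x` the composite `D_k ∘ D_{k'}` of two parts of the cobar differential is, up
to the desuspension `↓^{⊗n}` with `n = k + k' - 1`, the alternating sum over `i` of the
`ψ^k_{i,k'-1-i} (ψ^{k'} x)`.
Summing over `k + k' = n + 1` produces `(-1)^{n+1} ↓^{⊗n}` applied to the quadratic expression of
tensor length `n`, and `↓^{⊗n}` is injective.  The signs match because the Koszul exponents of
`↑^{⊗n}` and `↓^{⊗n}` differ by `n.choose 2`, which has the parity of `⌊n/2⌋`.
-/

open TensorProduct

namespace SU19

universe u
variable (R : Type u) [CommRing R] (A : ℤ → Type u)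
  [∀ i, AddCommGroup (A i)] [∀ i, Module R (A i)]

/-- iterated tensor product of graded pieces of `A` along a list of degrees. -/
noncomputable def Tc : List ℤ → ModuleCat.{u} R
  | [] => ModuleCat.of R R
  | d :: l => ModuleCat.of R (A d ⊗[R] (Tc l))

abbrev Tm (l : List ℤ) : Type u := (Tc R A l : Type u)

noncomputable def tsplit :
    (l₁ l₂ : List ℤ) → (Tm R A (l₁ ++ l₂) ≃ₗ[R] (Tm R A l₁ ⊗[R] Tm R A l₂))
  | [], l₂ => (TensorProduct.lid R (Tm R A l₂)).symm
  | d :: l₁, l₂ =>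
      (TensorProduct.congr (LinearEquiv.refl R (A d)) (tsplit l₁ l₂)).trans
        (TensorProduct.assoc R (A d) (Tm R A l₁) (Tm R A l₂)).symm

noncomputable def lcast {l₁ l₂ : List ℤ} (h : l₁ = l₂) : Tm R A l₁ ≃ₗ[R] Tm R A l₂ := by
  subst h; exact LinearEquiv.refl R _

def sgnz (z : ℤ) : ℤ := if Even z then 1 else -1

/-- Koszul exponent for applying a tensor power of maps of degree `±1` to a component
with degree list `l`: `Σ_j (m−1−j)·l_j`. -/
def kexp (l : List ℤ) : ℤ :=
  ∑ j ∈ Finset.range l.length, ((l.length - 1 - j : ℕ) : ℤ) * l.getD j 0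

lemma mapshift (l : List ℤ) : (l.map (fun e => e - 1)).map (fun e => e + 1) = l := by
  induction l with
  | nil => simp
  | cons a l ih => simp [ih]

lemma list_split_at (ds : List ℤ) (i : ℕ) (h : i < ds.length) :
    ds = ds.take i ++ ds.getD i 0 :: ds.drop (i + 1) := by
  conv_lhs => rw [← List.take_append_drop i ds]
  congr 1
  rw [List.drop_eq_getElem_cons h, List.getD_eq_getElem ds 0 h]

/-- `1^{⊗i} ⊗ ψ^k ⊗ 1^{⊗(n−1−i)}` (without the Koszul sign, which is a scalar on each
component and is applied separately), with values in `⊕_l T(l)`;  the component of the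
direct sum indexed by `l` is placed at the full list `take i ++ l ++ drop (i+1)`. -/
noncomputable def extPsi (ψk : (a : ℤ) → A a →ₗ[R] DirectSum (List ℤ) (fun l => Tm R A l))
    (ds : List ℤ) (i : ℕ) :
    Tm R A ds →ₗ[R] DirectSum (List ℤ) (fun l => Tm R A l) :=
  if h : i < ds.length then
    (DirectSum.toModule R (List ℤ) (DirectSum (List ℤ) (fun l => Tm R A l)) (fun l =>
        (DirectSum.lof R (List ℤ) (fun l' => Tm R A l')
            (ds.take i ++ (l ++ ds.drop (i + 1)))) ∘ₗ
          (tsplit R A (ds.take i) (l ++ ds.drop (i + 1))).symm.toLinearMap ∘ₗ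
          (TensorProduct.congr (LinearEquiv.refl R (Tm R A (ds.take i)))
              (tsplit R A l (ds.drop (i + 1))).symm).toLinearMap)) ∘ₗ
      (TensorProduct.directSumRight R R (Tm R A (ds.take i))
          (fun l => Tm R A l ⊗[R] Tm R A (ds.drop (i + 1)))).toLinearMap ∘ₗ
      (TensorProduct.congr (LinearEquiv.refl R (Tm R A (ds.take i)))
          (TensorProduct.directSumLeft R R (fun l => Tm R A l)
            (Tm R A (ds.drop (i + 1))))).toLinearMap ∘ₗ
      (TensorProduct.map LinearMap.id
          (TensorProduct.map (ψk (ds.getD i 0)) LinearMap.id)) ∘ₗ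
      (tsplit R A (ds.take i) (ds.getD i 0 :: ds.drop (i + 1))).toLinearMap ∘ₗ
      (lcast R A (list_split_at ds i h)).toLinearMap
  else 0

/-- `⊕_{n≥1} (↓A)^{⊗n}`: direct sum over nonempty lists of desuspended degrees, the
component of ↓-degree list `es` being `T(es + 1)`. -/
abbrev Bar : Type u :=
  DirectSum {l : List ℤ // l ≠ []} (fun l => Tm R A (l.val.map (fun e => e + 1)))

/-- pushing `⊕_l T(l)` (indexed by `A`-degree lists) into the bar construction,
together with the Koszul sign of `↓^{⊗m}` on each component. -/
noncomputable def pushDown : DirectSum (List ℤ) (fun l => Tm R A l) →ₗ[R] Bar R A :=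
  DirectSum.toModule R (List ℤ) (Bar R A) (fun l =>
    if h : l.map (fun e => e - 1) ≠ [] then
      sgnz (kexp l) •
        ((DirectSum.lof R {l' : List ℤ // l' ≠ []}
            (fun l' => Tm R A (l'.val.map (fun e => e + 1)))
            ⟨l.map (fun e => e - 1), h⟩) ∘ₗ
          (lcast R A (mapshift l).symm).toLinearMap)
    else 0)

/-- the part `Σ_{n≥1} Σ_{i=0}^{n−1} (−1)^{⌊n/2⌋+i(k+1)+k(n+1)} ↓^{⊗(n+k−1)} ∘ ψ^k_{i,n−1−i} ∘ ↑^{⊗n}`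
of the tilde-cobar differential `d` using `ψ^k` (all Koszul signs of `↑^{⊗n}`,
`↓^{⊗(n+k−1)}` and `ψ^k_{i,j}` are scalars on components and are included). -/
noncomputable def cobarD (k : ℕ)
    (ψ : (k : ℕ) → (a : ℤ) → A a →ₗ[R] DirectSum (List ℤ) (fun l => Tm R A l)) :
    Bar R A →ₗ[R] Bar R A :=
  DirectSum.toModule R _ _ (fun es =>
    ∑ i ∈ Finset.range es.val.length,
      ((-1 : ℤ) ^ (es.val.length / 2 + i * (k + 1) + k * (es.val.length + 1)) *
          sgnz (kexp es.val) *
          sgnz (((k : ℤ) - 2) * (((es.val.map (fun e => e + 1))).take i).sum)) •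
        ((pushDown R A) ∘ₗ (extPsi R A (ψ k) (es.val.map (fun e => e + 1)) i)))

/-- the signed extension `ψ^k_{i,·}` as an endomorphism of `⊕_l T(l)`, including the
Koszul sign of `1^{⊗i} ⊗ ψ^k ⊗ 1^{⊗(n−1−i)}`. -/
noncomputable def extPsiTotal (k i : ℕ)
    (ψ : (k : ℕ) → (a : ℤ) → A a →ₗ[R] DirectSum (List ℤ) (fun l => Tm R A l)) :
    DirectSum (List ℤ) (fun l => Tm R A l) →ₗ[R] DirectSum (List ℤ) (fun l => Tm R A l) :=
  DirectSum.toModule R (List ℤ) _ (fun l =>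
    sgnz (((k : ℤ) - 2) * ((l.take i).sum)) • extPsi R A (ψ k) l i)

end SU19
namespace SU19

universe u

section Sign

lemma sgnz_eq_negOnePow (z : ℤ) : sgnz z = (z.negOnePow : ℤ) := by
  rcases Int.even_or_odd z with hz | hz
  · simp [sgnz, hz, Int.negOnePow_even]
  · simp [sgnz, hz, Int.negOnePow_odd]

lemma sgnz_add (a b : ℤ) : sgnz (a + b) = sgnz a * sgnz b := by
  simp only [sgnz_eq_negOnePow, Int.negOnePow_add, Units.val_mul]

lemma sgnz_mul_self (a : ℤ) : sgnz a * sgnz a = 1 := by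
  rw [← sgnz_add, sgnz, if_pos (Even.add_self a)]

lemma sgnz_natCast (m : ℕ) : sgnz (m : ℤ) = (-1) ^ m := by
  simp [sgnz_eq_negOnePow, Int.negOnePow_def]

lemma neg_one_pow_choose_two (n : ℕ) : (-1 : ℤ) ^ n.choose 2 = (-1) ^ (n / 2) := by
  induction n using Nat.twoStepInduction with
  | zero => simp
  | one => simp
  | more n ih _ =>
    have hchoose : (n + 2).choose 2 = n.choose 2 + 2 * n + 1 := by
      simp only [Nat.choose_succ_succ' _ 1, Nat.choose_one_right]
      ring
    have hdiv : (n + 2) / 2 = n / 2 + 1 := by omega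
    rw [hchoose, hdiv, pow_succ, pow_succ, pow_add, ih, pow_mul]
    simp

lemma kexp_cons (a : ℤ) (l : List ℤ) : kexp (a :: l) = l.length * a + kexp l := by
  simp only [kexp, List.length_cons, Finset.sum_range_succ', List.getD_cons_succ,
    List.getD_cons_zero, add_tsub_cancel_right, tsub_zero, Nat.sub_add_eq, Nat.sub_right_comm]
  ring

lemma kexp_eq_kexp_map_sub_one (l : List ℤ) :
    kexp l = kexp (l.map (fun e => e - 1)) + (l.length.choose 2 : ℕ) := by
  induction l with
  | nil => simp
  | cons a l ih =>
    rw [List.map_cons, kexp_cons, kexp_cons, ih, List.length_map, List.length_cons,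
      Nat.choose_succ_succ' _ 1, Nat.choose_one_right]
    push_cast
    ring

lemma sgnz_kexp_mul_sgnz_kexp_map_sub_one (l : List ℤ) :
    sgnz (kexp l) * sgnz (kexp (l.map (fun e => e - 1))) = (-1) ^ (l.length / 2) := by
  rw [kexp_eq_kexp_map_sub_one l, sgnz_add, sgnz_natCast, neg_one_pow_choose_two,
    mul_right_comm, sgnz_mul_self, one_mul]

end Sign

section Concat

variable {R : Type u} [CommRing R] {A : ℤ → Type u}
  [∀ i, AddCommGroup (A i)] [∀ i, Module R (A i)]

/-- The empty tensor, i.e. the unit of `T([]) = R`. -/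
noncomputable def tone : Tm R A [] := (1 : R)

/-- The tensor `x ⊗ y ∈ T(d :: l)` of a homogeneous element `x` and a tensor `y ∈ T(l)`, as a
bilinear map. -/
noncomputable def tcons {d : ℤ} {l : List ℤ} : A d →ₗ[R] Tm R A l →ₗ[R] Tm R A (d :: l) :=
  TensorProduct.mk R (A d) (Tm R A l)

/-- The product `u ⊗ v ∈ T(l₁ ++ l₂)` of two tensors, as a bilinear map; this is the inverse of
`tsplit` on pure tensors. -/
noncomputable def concat {l₁ l₂ : List ℤ} :
    Tm R A l₁ →ₗ[R] Tm R A l₂ →ₗ[R] Tm R A (l₁ ++ l₂) :=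
  (TensorProduct.mk R _ _).compr₂ (tsplit R A l₁ l₂).symm.toLinearMap

variable {M : Type*} [AddCommMonoid M] [Module R M]

lemma hom_ext_tcons {d : ℤ} {l : List ℤ} {f g : Tm R A (d :: l) →ₗ[R] M}
    (h : ∀ x y, f (tcons x y) = g (tcons x y)) : f = g :=
  TensorProduct.ext' h

lemma hom_ext_tone {f g : Tm R A [] →ₗ[R] M} (h : f tone = g tone) : f = g :=
  LinearMap.ext_ring h

lemma hom_ext_concat {l₁ l₂ : List ℤ} {f g : Tm R A (l₁ ++ l₂) →ₗ[R] M}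
    (h : ∀ u v, f (concat u v) = g (concat u v)) : f = g :=
  (LinearMap.cancel_right (tsplit R A l₁ l₂).symm.surjective).mp (TensorProduct.ext' h)

lemma hom_ext_concat_tcons {l₁ l₂ : List ℤ} {a : ℤ} {f g : Tm R A (l₁ ++ a :: l₂) →ₗ[R] M}
    (h : ∀ u x v, f (concat u (tcons x v)) = g (concat u (tcons x v))) : f = g :=
  hom_ext_concat fun u => LinearMap.congr_fun <|
    hom_ext_tcons (f := f ∘ₗ concat u) (g := g ∘ₗ concat u) (h u)

lemma tsplit_concat {l₁ l₂ : List ℤ} (u : Tm R A l₁) (v : Tm R A l₂) :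
    tsplit R A l₁ l₂ (concat u v) = u ⊗ₜ v :=
  (tsplit R A l₁ l₂).apply_symm_apply _

lemma tone_concat {l : List ℤ} (v : Tm R A l) : concat (tone : Tm R A []) v = v :=
  one_smul R v

lemma tcons_concat {d : ℤ} {l₁ l₂ : List ℤ} (x : A d) (u : Tm R A l₁) (v : Tm R A l₂) :
    concat (tcons x u) v = tcons x (concat u v) :=
  rfl

lemma lcast_tcons {d : ℤ} {l₁ l₂ : List ℤ} (h : l₁ = l₂) (x : A d) (y : Tm R A l₁) :
    lcast R A (congrArg (d :: ·) h) (tcons x y) = tcons x (lcast R A h y) := by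
  subst h; rfl

lemma lcast_rfl {l : List ℤ} (y : Tm R A l) : lcast R A rfl y = y :=
  rfl

lemma lcast_lcast {l₁ l₂ l₃ : List ℤ} (h : l₁ = l₂) (h' : l₂ = l₃) (y : Tm R A l₁) :
    lcast R A h' (lcast R A h y) = lcast R A (h.trans h') y := by
  subst h h'; rfl

lemma concat_tone {l : List ℤ} (y : Tm R A l) :
    concat y tone = lcast R A (List.append_nil l).symm y := by
  suffices h : concat.flip tone = (lcast R A (List.append_nil l).symm).toLinearMap from
    LinearMap.congr_fun h y
  induction l with
  | nil => exact hom_ext_tone (tone_concat tone)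
  | cons d l ih =>
    refine hom_ext_tcons fun x y => ?_
    exact (congrArg (tcons x) (LinearMap.congr_fun (ih y) y)).trans
      (lcast_tcons (List.append_nil l).symm x y).symm

end Concat

section TensorSum

variable (R : Type u) [CommRing R] (A : ℤ → Type u)
  [∀ i, AddCommGroup (A i)] [∀ i, Module R (A i)]

/-- The tensor algebra `⊕_{n≥0} A^{⊗n}`, decomposed as the direct sum of the `T(l)` over all lists
`l` of degrees. -/
abbrev TensorSum : Type u := DirectSum (List ℤ) (fun l => Tm R A l)

/-- The inclusion of the summand `T(l)` in the tensor algebra. -/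
noncomputable abbrev incl (l : List ℤ) : Tm R A l →ₗ[R] TensorSum R A :=
  DirectSum.lof R (List ℤ) (fun l => Tm R A l) l

/-- The tensor power `A^{⊗n}`, as the submodule of the tensor algebra generated by the summands
`T(l)` with `l` of length `n`. -/
noncomputable def tensorPower (n : ℕ) : Submodule R (TensorSum R A) :=
  ⨆ (l : List ℤ) (_ : l.length = n), LinearMap.range (incl R A l)

variable {R A}

lemma incl_mem_tensorPower {l : List ℤ} {n : ℕ} (h : l.length = n) (y : Tm R A l) :
    incl R A l y ∈ tensorPower R A n :=
  Submodule.mem_iSup_of_mem l (Submodule.mem_iSup_of_mem h ⟨y, rfl⟩)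

lemma tensorPower_le {n : ℕ} {p : Submodule R (TensorSum R A)}
    (h : ∀ l : List ℤ, l.length = n → ∀ y, incl R A l y ∈ p) : tensorPower R A n ≤ p :=
  iSup₂_le fun l hl => by
    rintro _ ⟨y, rfl⟩
    exact h l hl y

lemma mem_tensorPower_of_support {n : ℕ} {z : TensorSum R A}
    (h : ∀ l, z l ≠ 0 → l.length = n) : z ∈ tensorPower R A n := by
  classical
  rw [← DirectSum.sum_support_of z]
  exact Submodule.sum_mem _ fun l hl =>
    incl_mem_tensorPower (h l (DFinsupp.mem_support_iff.mp hl)) (z l)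

lemma incl_lcast {l₁ l₂ : List ℤ} (h : l₁ = l₂) (y : Tm R A l₁) :
    incl R A l₂ (lcast R A h y) = incl R A l₁ y := by
  subst h; rfl

/-- An element `x` of `A` as a tensor of length one. -/
noncomputable def letter {a : ℤ} : A a →ₗ[R] TensorSum R A :=
  incl R A [a] ∘ₗ tcons.flip tone

lemma letter_mem_tensorPower {a : ℤ} (x : A a) : (letter x : TensorSum R A) ∈ tensorPower R A 1 :=
  incl_mem_tensorPower (List.length_singleton (a := a)) (tcons x tone)

/-- The map `z ↦ u ⊗ z ⊗ v` of the tensor algebra. -/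
noncomputable def sandwich {l₁ l₂ : List ℤ} (u : Tm R A l₁) (v : Tm R A l₂) :
    TensorSum R A →ₗ[R] TensorSum R A :=
  DirectSum.toModule R _ _ fun l => incl R A (l₁ ++ (l ++ l₂)) ∘ₗ concat u ∘ₗ concat.flip v

lemma sandwich_incl {l₁ l₂ : List ℤ} (u : Tm R A l₁) (v : Tm R A l₂) (l : List ℤ) (y : Tm R A l) :
    sandwich u v (incl R A l y) = incl R A (l₁ ++ (l ++ l₂)) (concat u (concat y v)) := by
  rw [sandwich, DirectSum.toModule_lof]
  rfl

lemma sandwich_mem_tensorPower {l₁ l₂ : List ℤ} (u : Tm R A l₁) (v : Tm R A l₂) {k : ℕ}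
    {z : TensorSum R A} (hz : z ∈ tensorPower R A k) :
    sandwich u v z ∈ tensorPower R A (l₁.length + (k + l₂.length)) := by
  suffices h : tensorPower R A k ≤ (tensorPower R A _).comap (sandwich u v) from h hz
  refine tensorPower_le fun l hl y => ?_
  rw [Submodule.mem_comap, sandwich_incl]
  exact incl_mem_tensorPower (by simp [hl]) _

lemma sandwich_tone_tone :
    sandwich (tone : Tm R A []) (tone : Tm R A []) = LinearMap.id := by
  refine DirectSum.linearMap_ext R fun l => LinearMap.ext fun y => ?_
  rw [LinearMap.comp_apply, sandwich_incl, concat_tone, tone_concat]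
  exact incl_lcast (List.append_nil l).symm y

/-- The linear map `u ⊗ (z ⊗ v) ↦ sandwich u v z`, in the form in which it occurs in `extPsi`. -/
noncomputable def sandwichTensor (l₁ l₂ : List ℤ) :
    Tm R A l₁ ⊗[R] (TensorSum R A ⊗[R] Tm R A l₂) →ₗ[R] TensorSum R A :=
  (DirectSum.toModule R (List ℤ) (TensorSum R A) fun l =>
      incl R A (l₁ ++ (l ++ l₂)) ∘ₗ (tsplit R A l₁ (l ++ l₂)).symm.toLinearMap ∘ₗ
        (TensorProduct.congr (LinearEquiv.refl R (Tm R A l₁))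
          (tsplit R A l l₂).symm).toLinearMap) ∘ₗ
    (TensorProduct.directSumRight R R (Tm R A l₁)
      (fun l => Tm R A l ⊗[R] Tm R A l₂)).toLinearMap ∘ₗ
    (TensorProduct.congr (LinearEquiv.refl R (Tm R A l₁))
      (TensorProduct.directSumLeft R R (fun l => Tm R A l) (Tm R A l₂))).toLinearMap

lemma sandwichTensor_tmul {l₁ l₂ : List ℤ} (u : Tm R A l₁) (z : TensorSum R A) (v : Tm R A l₂) :
    sandwichTensor l₁ l₂ (u ⊗ₜ (z ⊗ₜ v)) = sandwich u v z := by
  suffices h : sandwichTensor l₁ l₂ ∘ₗ TensorProduct.mk R _ _ u ∘ₗ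
      (TensorProduct.mk R _ _).flip v = sandwich u v from LinearMap.congr_fun h z
  refine DirectSum.linearMap_ext R fun l => LinearMap.ext fun y => ?_
  refine Eq.trans ?_ (sandwich_incl u v l y).symm
  simp only [sandwichTensor, LinearMap.comp_apply, LinearMap.flip_apply, TensorProduct.mk_apply,
    LinearEquiv.coe_coe, TensorProduct.congr_tmul, LinearEquiv.refl_apply,
    TensorProduct.directSumLeft_tmul_lof, TensorProduct.directSumRight_tmul_lof,
    DirectSum.toModule_lof]
  rfl

end TensorSum

section Extension

variable {R : Type u} [CommRing R] {A : ℤ → Type u}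
  [∀ i, AddCommGroup (A i)] [∀ i, Module R (A i)]

lemma extPsi_of_length_le (ψk : (a : ℤ) → A a →ₗ[R] TensorSum R A) {ds : List ℤ} {i : ℕ}
    (h : ds.length ≤ i) : extPsi R A ψk ds i = 0 :=
  dif_neg h.not_gt

lemma extPsi_apply (ψk : (a : ℤ) → A a →ₗ[R] TensorSum R A) {ds : List ℤ} {i : ℕ}
    (h : i < ds.length) (y : Tm R A ds) :
    extPsi R A ψk ds i y =
      sandwichTensor (ds.take i) (ds.drop (i + 1))
        (TensorProduct.map LinearMap.id (TensorProduct.map (ψk (ds.getD i 0)) LinearMap.id)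
          (tsplit R A (ds.take i) (ds.getD i 0 :: ds.drop (i + 1))
            (lcast R A (list_split_at ds i h) y))) := by
  rw [extPsi, dif_pos h]
  rfl

lemma extPsi_lcast (ψk : (a : ℤ) → A a →ₗ[R] TensorSum R A) {l₁ l₂ : List ℤ} (h : l₁ = l₂)
    (i : ℕ) (y : Tm R A l₁) :
    extPsi R A ψk l₂ i (lcast R A h y) = extPsi R A ψk l₁ i y := by
  subst h; rfl

lemma extPsi_concat_tcons (ψk : (a : ℤ) → A a →ₗ[R] TensorSum R A) {l₁ l₂ : List ℤ} {a : ℤ}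
    (u : Tm R A l₁) (x : A a) (v : Tm R A l₂) :
    extPsi R A ψk (l₁ ++ a :: l₂) l₁.length (concat u (tcons x v)) = sandwich u v (ψk a x) := by
  -- The sublists cut out of `ds` by `extPsi` equal `l₁`, `a`, `l₂` only propositionally.
  suffices h : ∀ (ds : List ℤ) (i : ℕ) (l₁ l₂ : List ℤ) (a : ℤ), i < ds.length →
      ds.take i = l₁ → ds.getD i 0 = a → ds.drop (i + 1) = l₂ → ∀ (hds : l₁ ++ a :: l₂ = ds)
      (u : Tm R A l₁) (x : A a) (v : Tm R A l₂),
      extPsi R A ψk ds i (lcast R A hds (concat u (tcons x v))) = sandwich u v (ψk a x) from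
    (congrArg _ (lcast_rfl _)).symm.trans <|
      h _ l₁.length l₁ l₂ a (by simp) (by simp) (by simp) (by simp) rfl u x v
  rintro ds i _ _ _ hi rfl rfl rfl hds u x v
  rw [extPsi_apply ψk hi, lcast_lcast, lcast_rfl, tsplit_concat]
  exact sandwichTensor_tmul u (ψk _ x) v

lemma extPsi_mem_tensorPower {ψk : (a : ℤ) → A a →ₗ[R] TensorSum R A} {k : ℕ}
    (hψ : ∀ a x, ψk a x ∈ tensorPower R A k) {m : ℕ} {ds : List ℤ} (hds : ds.length = m + 1)
    (i : ℕ) (y : Tm R A ds) :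
    extPsi R A ψk ds i y ∈ tensorPower R A (m + k) := by
  rcases le_or_gt ds.length i with hi | hi
  · simp [extPsi_of_length_le ψk hi]
  obtain ⟨l₁, a, l₂, rfl, rfl⟩ : ∃ l₁ a l₂, ds = l₁ ++ a :: l₂ ∧ l₁.length = i :=
    ⟨_, _, _, list_split_at ds i hi, by simp [hi.le]⟩
  rw [← Submodule.Quotient.mk_eq_zero, ← Submodule.mkQ_apply]
  suffices h : (tensorPower R A (m + k)).mkQ ∘ₗ extPsi R A ψk (l₁ ++ a :: l₂) l₁.length = 0 from
    LinearMap.congr_fun h y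
  refine hom_ext_concat_tcons fun u x v => ?_
  have hlen : l₁.length + (k + l₂.length) = m + k := by
    simp only [List.length_append, List.length_cons] at hds
    omega
  rw [LinearMap.comp_apply, extPsi_concat_tcons, ← hlen]
  exact (Submodule.Quotient.mk_eq_zero _).mpr (sandwich_mem_tensorPower u v (hψ a x))

variable (ψ : (k : ℕ) → (a : ℤ) → A a →ₗ[R] TensorSum R A)

lemma extPsiTotal_incl (k i : ℕ) (l : List ℤ) (y : Tm R A l) :
    extPsiTotal R A k i ψ (incl R A l y) =
      sgnz (((k : ℤ) - 2) * (l.take i).sum) • extPsi R A (ψ k) l i y := by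
  rw [extPsiTotal, DirectSum.toModule_lof, LinearMap.smul_apply]

lemma extPsiTotal_letter (k : ℕ) {a : ℤ} (x : A a) :
    extPsiTotal R A k 0 ψ (letter x) = ψ k a x := by
  have h : extPsi R A (ψ k) [a] 0 (tcons x tone) = ψ k a x := by
    have := extPsi_concat_tcons (ψ k) (tone : Tm R A []) x tone
    rwa [tone_concat, sandwich_tone_tone] at this
  rw [letter, LinearMap.comp_apply, extPsiTotal_incl, LinearMap.flip_apply, h]
  simp [sgnz]

variable {ψ}

lemma extPsiTotal_mem_tensorPower {k : ℕ} (hψ : ∀ a x, ψ k a x ∈ tensorPower R A k) (i : ℕ)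
    {m : ℕ} {z : TensorSum R A} (hz : z ∈ tensorPower R A (m + 1)) :
    extPsiTotal R A k i ψ z ∈ tensorPower R A (m + k) := by
  suffices h : tensorPower R A (m + 1) ≤ (tensorPower R A _).comap (extPsiTotal R A k i ψ) from
    h hz
  refine tensorPower_le fun l hl y => ?_
  rw [Submodule.mem_comap, extPsiTotal_incl]
  exact zsmul_mem (extPsi_mem_tensorPower hψ hl i y) _

end Extension

section Desuspension

variable {R : Type u} [CommRing R] {A : ℤ → Type u}
  [∀ i, AddCommGroup (A i)] [∀ i, Module R (A i)]

lemma pushDown_incl {l : List ℤ} (hl : l ≠ []) (y : Tm R A l) :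
    pushDown R A (incl R A l y) =
      sgnz (kexp l) • DirectSum.lof R {l' : List ℤ // l' ≠ []}
        (fun l' => Tm R A (l'.val.map (fun e => e + 1)))
        ⟨l.map (fun e => e - 1), by simpa using hl⟩ (lcast R A (mapshift l).symm y) := by
  rw [pushDown, DirectSum.toModule_lof, dif_pos (by simpa using hl)]
  rfl

variable (R A) in
/-- The suspension `↑^{⊗n}`, normalised by the Koszul sign that makes it a left inverse of
`pushDown` on tensors of positive length. -/
noncomputable def pullUp : Bar R A →ₗ[R] TensorSum R A :=
  DirectSum.toModule R _ _ fun es =>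
    sgnz (kexp (es.val.map (fun e => e + 1))) • incl R A (es.val.map (fun e => e + 1))

lemma pullUp_pushDown {n : ℕ} {z : TensorSum R A} (hz : z ∈ tensorPower R A (n + 1)) :
    pullUp R A (pushDown R A z) = z := by
  suffices h : tensorPower R A (n + 1) ≤
      LinearMap.eqLocus (pullUp R A ∘ₗ pushDown R A) LinearMap.id from h hz
  refine tensorPower_le fun l hl y => ?_
  have hne : l ≠ [] := List.ne_nil_of_length_eq_add_one hl
  change pullUp R A (pushDown R A (incl R A l y)) = incl R A l y
  rw [pushDown_incl hne, map_zsmul, pullUp, DirectSum.toModule_lof, LinearMap.smul_apply,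
    incl_lcast, mapshift, smul_smul, sgnz_mul_self, one_smul]

lemma eq_zero_of_pushDown_eq_zero {n : ℕ} {z : TensorSum R A}
    (hz : z ∈ tensorPower R A (n + 1)) (h : pushDown R A z = 0) : z = 0 := by
  rw [← pullUp_pushDown hz, h, map_zero]

end Desuspension

section Cobar

variable {R : Type u} [CommRing R] {A : ℤ → Type u}
  [∀ i, AddCommGroup (A i)] [∀ i, Module R (A i)]
  (ψ : (k : ℕ) → (a : ℤ) → A a →ₗ[R] TensorSum R A)

lemma cobarD_pushDown_incl (k : ℕ) {l : List ℤ} (hl : l ≠ []) (y : Tm R A l) :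
    cobarD R A k ψ (pushDown R A (incl R A l y)) =
      ∑ i ∈ Finset.range l.length, (-1 : ℤ) ^ (i * (k + 1) + k * (l.length + 1)) •
        pushDown R A (extPsiTotal R A k i ψ (incl R A l y)) := by
  rw [pushDown_incl hl, map_zsmul, cobarD, DirectSum.toModule_lof]
  simp only [List.length_map, LinearMap.sum_apply, Finset.smul_sum]
  refine Finset.sum_congr rfl fun i _ => ?_
  rw [extPsiTotal_incl, LinearMap.smul_apply, LinearMap.comp_apply, extPsi_lcast, map_zsmul,
    smul_smul, smul_smul, mapshift]
  congr 1
  set p := sgnz (kexp l)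
  set q := sgnz (kexp (l.map (fun e => e - 1)))
  set w := sgnz (((k : ℤ) - 2) * (l.take i).sum)
  set v := (-1 : ℤ) ^ (i * (k + 1) + k * (l.length + 1))
  have hpp : p * p = 1 := sgnz_mul_self _
  have hqq : q * q = 1 := sgnz_mul_self _
  calc p * ((-1) ^ (l.length / 2 + i * (k + 1) + k * (l.length + 1)) * q * w)
      = p * (p * q * v * q * w) := by
        rw [add_assoc, pow_add, ← sgnz_kexp_mul_sgnz_kexp_map_sub_one]
    _ = p * p * (q * q) * (v * w) := by ring
    _ = v * w := by rw [hpp, hqq, one_mul, one_mul]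

lemma cobarD_pushDown (k : ℕ) {n : ℕ} {z : TensorSum R A} (hz : z ∈ tensorPower R A (n + 1)) :
    cobarD R A k ψ (pushDown R A z) =
      ∑ i ∈ Finset.range (n + 1), (-1 : ℤ) ^ (i * (k + 1) + k * (n + 2)) •
        pushDown R A (extPsiTotal R A k i ψ z) := by
  suffices h : tensorPower R A (n + 1) ≤ LinearMap.eqLocus (cobarD R A k ψ ∘ₗ pushDown R A)
      (∑ i ∈ Finset.range (n + 1), (-1 : ℤ) ^ (i * (k + 1) + k * (n + 2)) •
        (pushDown R A ∘ₗ extPsiTotal R A k i ψ)) by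
    simpa only [LinearMap.mem_eqLocus, LinearMap.sum_apply, LinearMap.smul_apply,
      LinearMap.comp_apply] using h hz
  refine tensorPower_le fun l hl y => ?_
  have hne : l ≠ [] := List.ne_nil_of_length_eq_add_one hl
  simp only [LinearMap.mem_eqLocus, LinearMap.sum_apply, LinearMap.smul_apply,
    LinearMap.comp_apply]
  rw [cobarD_pushDown_incl ψ k hne, hl]

lemma cobarD_pushDown_letter (k : ℕ) {a : ℤ} (x : A a) :
    cobarD R A k ψ (pushDown R A (letter x)) = pushDown R A (ψ k a x) := by
  rw [cobarD_pushDown ψ k (n := 0) (letter_mem_tensorPower x)]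
  simp [extPsiTotal_letter, pow_mul']

/-- The quadratic expression
`Σ_{l=0}^{n-1} Σ_{i=0}^{n-l-1} (-1)^{l(n+i+1)} ψ^{l+1}_{i,n-l-1-i} ∘ ψ^{n-l} : A → A^{⊗n}`, in
degree `a`, whose vanishing is the `n`-th structure relation of an `A_∞`-coalgebra. -/
noncomputable def structureRelator (n : ℕ) (a : ℤ) : A a →ₗ[R] TensorSum R A :=
  ∑ l ∈ Finset.range n, ∑ i ∈ Finset.range (n - l),
    (-1 : ℤ) ^ (l * (n + i + 1)) • (extPsiTotal R A (l + 1) i ψ ∘ₗ ψ (n - l) a)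

lemma structureRelator_apply (n : ℕ) {a : ℤ} (x : A a) :
    structureRelator ψ n a x = ∑ l ∈ Finset.range n, ∑ i ∈ Finset.range (n - l),
      (-1 : ℤ) ^ (l * (n + i + 1)) • extPsiTotal R A (l + 1) i ψ (ψ (n - l) a x) := by
  simp only [structureRelator, LinearMap.sum_apply, LinearMap.smul_apply, LinearMap.comp_apply]

variable {ψ} (hψ : ∀ k, 1 ≤ k → ∀ a x, ψ k a x ∈ tensorPower R A k)
include hψ

lemma structureRelator_mem_tensorPower (n : ℕ) {a : ℤ} (x : A a) :
    structureRelator ψ n a x ∈ tensorPower R A n := by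
  rw [structureRelator_apply]
  refine Submodule.sum_mem _ fun l hl => Submodule.sum_mem _ fun i _ => zsmul_mem ?_ _
  obtain ⟨m, rfl⟩ := Nat.exists_eq_add_of_lt (Finset.mem_range.mp hl)
  have hm : l + m + 1 - l = m + 1 := by omega
  have hlen : m + (l + 1) = l + m + 1 := by omega
  rw [hm, ← hlen]
  exact extPsiTotal_mem_tensorPower (hψ _ le_add_self) i (hψ _ le_add_self a x)

lemma cobarD_cobarD_pushDown_letter (l m : ℕ) {a : ℤ} (x : A a) :
    cobarD R A (l + 1) ψ (cobarD R A (m + 1) ψ (pushDown R A (letter x))) =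
      (-1 : ℤ) ^ (l + m) • ∑ i ∈ Finset.range (m + 1), (-1 : ℤ) ^ (l * (l + m + 1 + i + 1)) •
        pushDown R A (extPsiTotal R A (l + 1) i ψ (ψ (m + 1) a x)) := by
  rw [cobarD_pushDown_letter, cobarD_pushDown ψ _ (hψ (m + 1) le_add_self a x), Finset.smul_sum]
  refine Finset.sum_congr rfl fun i _ => ?_
  rw [smul_smul, ← pow_add]
  congr 1
  apply neg_one_pow_congr
  simp only [Nat.even_add, Nat.even_mul, Nat.even_add_one]
  tauto

lemma sum_cobarD_cobarD_pushDown_letter (s : ℕ) {a : ℤ} (x : A a) :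
    ∑ k ∈ Finset.Icc 1 (s + 1),
        cobarD R A k ψ (cobarD R A (s + 2 - k) ψ (pushDown R A (letter x))) =
      (-1 : ℤ) ^ s • pushDown R A (structureRelator ψ (s + 1) a x) := by
  rw [structureRelator_apply, ← Finset.Ico_add_one_right_eq_Icc, Finset.sum_Ico_eq_sum_range,
    Nat.add_sub_cancel]
  simp only [map_sum, map_zsmul]
  rw [Finset.smul_sum]
  refine Finset.sum_congr rfl fun l hl => ?_
  obtain ⟨m, rfl⟩ := Nat.exists_eq_add_of_le (Finset.mem_range_succ_iff.mp hl)
  have houter : l + m + 2 - (1 + l) = m + 1 := by omega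
  have hinner : l + m + 1 - l = m + 1 := by omega
  rw [houter, hinner, add_comm 1 l, cobarD_cobarD_pushDown_letter hψ]

end Cobar

/-- In the Koszul signs of `cobarD` and `extPsiTotal` the number `k - 2` is the formal degree of
`ψ^k`. -/
theorem statement19_general (R : Type u) [CommRing R] (A : ℤ → Type u)
    [∀ i, AddCommGroup (A i)] [∀ i, Module R (A i)]
    (ψ : (k : ℕ) → (a : ℤ) → A a →ₗ[R] TensorSum R A)
    (hψ : ∀ k, 1 ≤ k → ∀ a x, ψ k a x ∈ tensorPower R A k) (s : ℕ)
    (hd : ∑ k ∈ Finset.Icc 1 (s + 1), cobarD R A k ψ ∘ₗ cobarD R A (s + 2 - k) ψ = 0) (a : ℤ) :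
    structureRelator ψ (s + 1) a = 0 := by
  refine LinearMap.ext fun x => ?_
  refine eq_zero_of_pushDown_eq_zero (structureRelator_mem_tensorPower hψ (s + 1) x) ?_
  have hsq : (-1 : ℤ) ^ s • pushDown R A (structureRelator ψ (s + 1) a x) = 0 := by
    rw [← sum_cobarD_cobarD_pushDown_letter hψ]
    simpa only [LinearMap.sum_apply, LinearMap.comp_apply, LinearMap.zero_apply] using
      LinearMap.congr_fun hd (pushDown R A (letter x))
  exact (isUnit_neg_one.pow s).smul_eq_zero.mp hsq

/-- If `(A, ψⁿ)_{n≥1}` is an `A_∞`-coalgebra — the operations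
`ψ^k : A → A^{⊗k}` are homogeneous of degree `k−2` and the derivation-type map `d` on
`⊕_{n≥1}(↓A)^{⊗n}` satisfies `d² = 0` (stated blockwise: the part of `d²` shifting
tensor length by `s` vanishes for every `s`, i.e. `Σ_{k+k'=s+2} D_k ∘ D_{k'} = 0`) —
then for every `n ≥ 1` the quadratic relations
`Σ_{ℓ=0}^{n−1} Σ_{i=0}^{n−ℓ−1} (−1)^{ℓ(n+i+1)} ψ^{ℓ+1}_{i,n−ℓ−1−i} ∘ ψ^{n−ℓ} = 0`
hold as maps `A → A^{⊗n}` (with values in `⊕_l T(l)`, which contains each `(A^{⊗n})_m`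
as the sum of the components of length `n`). -/
theorem statement19 (R : Type u) [CommRing R] (A : ℤ → Type u)
    [∀ i, AddCommGroup (A i)] [∀ i, Module R (A i)]
    (ψ : (k : ℕ) → (a : ℤ) → A a →ₗ[R] DirectSum (List ℤ) (fun l => Tm R A l))
    (hhom : ∀ k, 1 ≤ k → ∀ (a : ℤ) (x : A a) (l : List ℤ),
      (ψ k a x) l ≠ 0 → l.length = k ∧ l.sum = a + ((k : ℤ) - 2))
    (hd : ∀ s : ℕ,
      (∑ k ∈ Finset.Icc 1 (s + 1), (cobarD R A k ψ) ∘ₗ (cobarD R A (s + 2 - k) ψ)) = 0) :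
    ∀ n : ℕ, 1 ≤ n → ∀ a : ℤ,
      (∑ l ∈ Finset.range n, ∑ i ∈ Finset.range (n - l),
        ((-1 : ℤ) ^ (l * (n + i + 1))) •
          ((extPsiTotal R A (l + 1) i ψ) ∘ₗ (ψ (n - l) a))) = 0 := by
  intro n hn a
  obtain ⟨s, rfl⟩ := Nat.exists_eq_add_of_le' hn
  exact statement19_general R A ψ
    (fun k hk b x => mem_tensorPower_of_support fun l hl => (hhom k hk b x l hl).1) s (hd s) a

end SU19
end
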